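/- arXiv:2003.02521 — 2 statements merged into one kernel-verified Lean document; each statement's English description precedes it below -/
import Mathlib

section
/- (k-universal models for finitely closed UIDs and UFDs) Let Σ be a finite set of UIDs Σ_UID and UFDs Σ_UFD closed under finite implication, let k ∈ ℕ, and let I₀ be a finite instance satisfying Σ_UFD. Then there exists a finite superinstance I of I₀ that satisfies Σ and is k-sound for Σ, I₀, and the class ACQ of acyclic Boolean CQs (hence a finite k-universal model for ACQs). -/
namespace FQA

/-- A relational signature: a finite set of relation names, each with an arity `≥ 1`. -/
structure Sig where
  Rel : Type
  rel_fin : Finite Rel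
  ar : Rel → ℕ
  ar_pos : ∀ R, 1 ≤ ar R

/-- The positions of a signature: pairs of a relation and an index into its arity. -/
abbrev Sig.Pos (σ : Sig) : Type := Σ R : σ.Rel, Fin (σ.ar R)

/-- A fact `R(a₁, …, a_{ar R})` with elements from `α`. -/
abbrev Fact (σ : Sig) (α : Type) : Type := Σ R : σ.Rel, Fin (σ.ar R) → α

/-- An instance is a set of facts. -/
abbrev Inst (σ : Sig) (α : Type) : Type := Set (Fact σ α)

variable {σ : Sig} {α β : Type}

/-- Element `a` occurs at position `p` in some fact of the instance `I`. -/
def occursAt (I : Inst σ α) (p : σ.Pos) (a : α) : Prop :=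
  ∃ t : Fin (σ.ar p.1) → α, (⟨p.1, t⟩ : Fact σ α) ∈ I ∧ t p.2 = a

/-- The active domain of an instance: the elements occurring in some fact. -/
def activeDom (I : Inst σ α) : Set α :=
  {a | ∃ F : Fact σ α, F ∈ I ∧ ∃ i, F.2 i = a}

/-- A unary inclusion dependency `src ⊆ dst` (nontrivial: `src ≠ dst`). -/
structure UID (σ : Sig) where
  src : σ.Pos
  dst : σ.Pos
  ne : src ≠ dst

/-- The reverse of a UID. -/
def UID.rev (τ : UID σ) : UID σ := ⟨τ.dst, τ.src, τ.ne.symm⟩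

/-- An instance satisfies a UID if every element occurring at `src` also occurs at `dst`. -/
def satUID (I : Inst σ α) (τ : UID σ) : Prop :=
  ∀ a, occursAt I τ.src a → occursAt I τ.dst a

/-- A unary functional dependency `R^src → R^dst` (nontrivial: `src ≠ dst`). -/
structure UFD (σ : Sig) where
  rel : σ.Rel
  src : Fin (σ.ar rel)
  dst : Fin (σ.ar rel)
  ne : src ≠ dst

/-- The reverse of a UFD. -/
def UFD.rev (φ : UFD σ) : UFD σ := ⟨φ.rel, φ.dst, φ.src, φ.ne.symm⟩

/-- The source position of a UFD, as a position of the signature. -/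
def UFD.posSrc (φ : UFD σ) : σ.Pos := ⟨φ.rel, φ.src⟩

/-- The target position of a UFD, as a position of the signature. -/
def UFD.posDst (φ : UFD σ) : σ.Pos := ⟨φ.rel, φ.dst⟩

/-- An instance satisfies a UFD if any two facts of `rel` agreeing at `src` agree at `dst`. -/
def satUFD (I : Inst σ α) (φ : UFD σ) : Prop :=
  ∀ t u : Fin (σ.ar φ.rel) → α,
    (⟨φ.rel, t⟩ : Fact σ α) ∈ I → (⟨φ.rel, u⟩ : Fact σ α) ∈ I →
    t φ.src = u φ.src → t φ.dst = u φ.dst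

/-- A Boolean conjunctive query: existentially quantified variables `Fin nv` and a
conjunction (list) of constant-free atoms, in which every variable occurs. -/
structure CQ (σ : Sig) where
  nv : ℕ
  atoms : List (Fact σ (Fin nv))
  vars_occur : ∀ x : Fin nv, ∃ A ∈ atoms, ∃ i, A.2 i = x

/-- The size of a CQ: its number of atoms. -/
def CQ.size (q : CQ σ) : ℕ := q.atoms.length

/-- A Boolean CQ holds in an instance iff there is a homomorphism (a match) from its
atoms to facts of the instance. -/
def satCQ (I : Inst σ α) (q : CQ σ) : Prop :=
  ∃ h : Fin q.nv → α, ∀ A ∈ q.atoms, (⟨A.1, fun i => h (A.2 i)⟩ : Fact σ α) ∈ I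

/-- A Berge cycle of a CQ: `m + 2 ≥ 2` pairwise distinct atom occurrences and pairwise
distinct variables, cyclically incident. -/
def HasBergeCycle (q : CQ σ) : Prop :=
  ∃ m : ℕ, ∃ A : Fin (m + 2) → Fin q.atoms.length, Function.Injective A ∧
    ∃ x : Fin (m + 2) → Fin q.nv, Function.Injective x ∧
      ∀ i : Fin (m + 2),
        (∃ a, (q.atoms.get (A i)).2 a = x i) ∧
        (∃ a, (q.atoms.get (A (i + 1))).2 a = x i)

/-- An acyclic CQ (ACQ): no Berge cycle and no variable occurring twice in one atom. -/
def IsACQ (q : CQ σ) : Prop :=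
  ¬ HasBergeCycle q ∧ ∀ A ∈ q.atoms, Function.Injective A.2

/-- An instance satisfies a set of UIDs and a set of UFDs. -/
def satAllU (I : Inst σ ℕ) (Su : Set (UID σ)) (Sf : Set (UFD σ)) : Prop :=
  (∀ τ ∈ Su, satUID I τ) ∧ (∀ φ ∈ Sf, satUFD I φ)

/-- Unrestricted open-world entailment with respect to UIDs and UFDs. -/
def unrEntailsU (I₀ : Inst σ ℕ) (Su : Set (UID σ)) (Sf : Set (UFD σ)) (q : CQ σ) : Prop :=
  ∀ I : Inst σ ℕ, I₀ ⊆ I → satAllU I Su Sf → satCQ I q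

/-- A (nontrivial) UID is finitely implied by UIDs `Su` and UFDs `Sf`. -/
def finImpUIDu (Su : Set (UID σ)) (Sf : Set (UFD σ)) (τ : UID σ) : Prop :=
  ∀ I : Inst σ ℕ, I.Finite → satAllU I Su Sf → satUID I τ

/-- A (nontrivial) UFD is finitely implied by UIDs `Su` and UFDs `Sf`. -/
def finImpUFDu (Su : Set (UID σ)) (Sf : Set (UFD σ)) (φ : UFD σ) : Prop :=
  ∀ I : Inst σ ℕ, I.Finite → satAllU I Su Sf → satUFD I φ

/-- Elements of the UID chase: base elements of the initial instance, and nulls.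
The null `CEl.null x p r` is the fresh element placed at position `r` of the fact
created to satisfy the requirement that `x` appear at position `p`. -/
inductive CEl (σ : Sig) : Type
  | base : ℕ → CEl σ
  | null : CEl σ → σ.Pos → σ.Pos → CEl σ

/-- `Created I₀ Su x p` holds when the UID chase of `I₀` by the (transitively closed)
UIDs `Su` creates a new fact whose exported element is `x`, placed at position `p`.
The first round is performed as a core-chase round: for each element of `I₀` and each
position where it wants to appear, a single new fact is created; afterwards, each
null introduced at a position `r` spawns one new fact for each UID of `Su` with
source `r`. -/
inductive Created (I₀ : Inst σ ℕ) (Su : Set (UID σ)) : CEl σ → σ.Pos → Prop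
  | root (a : ℕ) (p : σ.Pos) :
      (∃ τ ∈ Su, τ.dst = p ∧ occursAt I₀ τ.src a) →
      ¬ occursAt I₀ p a →
      Created I₀ Su (CEl.base a) p
  | step (x : CEl σ) (p r q : σ.Pos) :
      Created I₀ Su x p → r.1 = p.1 → r ≠ p →
      (∃ τ ∈ Su, τ.src = r ∧ τ.dst = q) →
      Created I₀ Su (CEl.null x p r) q

/-- The UID chase of `I₀` by `Su`: the facts of `I₀` (over base elements) together
with, for each requirement `(x, p)` that is created, the fact of relation `p.1` with
`x` at position `p` and fresh nulls at all other positions. -/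
def chaseInst (I₀ : Inst σ ℕ) (Su : Set (UID σ)) : Inst σ (CEl σ) :=
  {F | (∃ F₀ : Fact σ ℕ, F₀ ∈ I₀ ∧ F = ⟨F₀.1, fun i => CEl.base (F₀.2 i)⟩) ∨
       (∃ (x : CEl σ) (p : σ.Pos), Created I₀ Su x p ∧
          F = ⟨p.1, fun i => if i = p.2 then x else CEl.null x p ⟨p.1, i⟩⟩)}

/-!
Let `C` be the chase of `I₀` by the inclusions and `Q` its quotient by `k`-round bisimulation types,
which is finite. A match of an acyclic query with at most `k` atoms lifts from `Q` to `C`, and `C`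
maps to every model of the dependencies that contains `I₀`. So it suffices to build a finite model
on `I₀` together with a homomorphism to `Q`, that is, a labelling of its elements by types.

In a finite instance, UIDs and UFDs compare the sizes of projections. Ranking the positions along
these comparisons, finite closure says that a dependency between positions of equal rank also holds
in the opposite direction. The inclusions are repaired rank by rank. A new fact copies an old one
with the same labels, except at the positions that determine the repaired one; these have at least
the current rank, so no inclusion into a lower rank breaks. After `k + 1` rounds of repairs with
fresh elements, all remaining violations at the current rank are labelled by types of chase elements
created by `k + 1` consecutive steps, and such a type depends only on the position. The required
sets can then be padded to a common size, and whenever an element is missing at one position,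
counting provides a missing element with the correct label at each equivalent position of the same
relation; one fact repairs them together.
-/

/-! ### Homomorphisms, projections and functional dependencies -/

instance (σ : Sig) : Finite σ.Rel := σ.rel_fin

/-- The image of a fact under a map of elements. The map `f` is a homomorphism from `I` to `J` when
`Set.MapsTo (Fact.map f) I J`. -/
def Fact.map (f : α → β) (F : Fact σ α) : Fact σ β := ⟨F.1, f ∘ F.2⟩

lemma mk_mem_image_map {f : α → β} {I : Inst σ α} {R : σ.Rel} {u : Fin (σ.ar R) → β} :
    (⟨R, u⟩ : Fact σ β) ∈ Fact.map f '' I ↔ ∃ t, (⟨R, t⟩ : Fact σ α) ∈ I ∧ f ∘ t = u := by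
  constructor
  · rintro ⟨⟨R', t⟩, ht, h⟩
    cases h
    exact ⟨t, ht, rfl⟩
  · rintro ⟨t, ht, rfl⟩
    exact ⟨⟨R, t⟩, ht, rfl⟩

lemma satCQ.map {f : α → β} {I : Inst σ α} {J : Inst σ β} {q : CQ σ} (hq : satCQ I q)
    (hf : Set.MapsTo (Fact.map f) I J) : satCQ J q := by
  obtain ⟨g, hg⟩ := hq
  exact ⟨f ∘ g, fun A hA => hf (hg A hA)⟩

/-- The projection `π_p(I)`: the set of elements occurring at position `p` of `I`. -/
def proj (I : Inst σ α) (p : σ.Pos) : Set α := {a | occursAt I p a}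

lemma mem_proj_of_mem {I : Inst σ α} {R : σ.Rel} {t : Fin (σ.ar R) → α}
    (ht : (⟨R, t⟩ : Fact σ α) ∈ I) (i : Fin (σ.ar R)) : t i ∈ proj I ⟨R, i⟩ :=
  ⟨t, ht, rfl⟩

lemma proj_mono {I J : Inst σ α} (h : I ⊆ J) (p : σ.Pos) : proj I p ⊆ proj J p := by
  rintro _ ⟨t, ht, rfl⟩
  exact ⟨t, h ht, rfl⟩

lemma finite_proj {I : Inst σ α} (hI : I.Finite) (p : σ.Pos) : (proj I p).Finite := by
  refine (hI.biUnion fun F _ => Set.finite_range F.2).subset ?_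
  rintro _ ⟨t, ht, rfl⟩
  exact Set.mem_biUnion ht ⟨p.2, rfl⟩

lemma mem_proj_insert {R : σ.Rel} {t : Fin (σ.ar R) → α} {I : Inst σ α} {p : σ.Pos} {a : α} :
    a ∈ proj (insert ⟨R, t⟩ I) p ↔ a ∈ proj I p ∨ ∃ j, p = ⟨R, j⟩ ∧ a = t j := by
  constructor
  · obtain ⟨R', i⟩ := p
    rintro ⟨u, hu | hu, rfl⟩
    · cases hu
      exact Or.inr ⟨i, rfl, rfl⟩
    · exact Or.inl ⟨u, hu, rfl⟩
  · rintro (ha | ⟨j, rfl, rfl⟩)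
    · exact proj_mono (Set.subset_insert _ _) p ha
    · exact mem_proj_of_mem (Set.mem_insert _ _) j

/-- The unary functional dependency `R^i → R^j`; unlike in `satUFD`, `i = j` is allowed. -/
def SatFD (I : Inst σ α) (R : σ.Rel) (i j : Fin (σ.ar R)) : Prop :=
  ∀ t u : Fin (σ.ar R) → α, (⟨R, t⟩ : Fact σ α) ∈ I → (⟨R, u⟩ : Fact σ α) ∈ I →
    t i = u i → t j = u j

lemma SatFD.insert {I : Inst σ α} {R S : σ.Rel} {i j : Fin (σ.ar S)} {t : Fin (σ.ar R) → α}
    (hI : SatFD I S i j)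
    (ht : ∀ e : S = R, ∀ u, (⟨S, u⟩ : Fact σ α) ∈ I → u i = t (e ▸ i) → u j = t (e ▸ j)) :
    SatFD (insert ⟨R, t⟩ I) S i j := by
  rintro u v (hu | hu) (hv | hv) huv
  · cases hu; cases hv; rfl
  · cases hu; exact (ht rfl v hv huv.symm).symm
  · cases hv; exact ht rfl u hu huv
  · exact hI u v hu hv huv

/-! ### Bisimulation types and acyclic queries -/

/-- Possible `n`-round bisimulation types of elements: a type of level `n + 1` lists the facts
around an element as pairs of its position and the tuple of level-`n` types. -/
def BisimType (σ : Sig) : ℕ → Type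
  | 0 => Unit
  | n + 1 => Set (Σ p : σ.Pos, (Fin (σ.ar p.1) → BisimType σ n))

instance instFiniteBisimType (σ : Sig) : (n : ℕ) → Finite (BisimType σ n)
  | 0 => inferInstanceAs (Finite Unit)
  | n + 1 =>
    haveI : Finite (BisimType σ n) := instFiniteBisimType σ n
    inferInstanceAs (Finite (Set (Σ p : σ.Pos, (Fin (σ.ar p.1) → BisimType σ n))))

/-- The `n`-round bisimulation type of the element `x` of `M`. -/
def bisimType (M : Inst σ α) : (n : ℕ) → α → BisimType σ n
  | 0, _ => ()
  | n + 1, x => show Set (Σ p : σ.Pos, (Fin (σ.ar p.1) → BisimType σ n)) from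
      {w | ∃ t, (⟨w.1.1, t⟩ : Fact σ α) ∈ M ∧ t w.1.2 = x ∧ bisimType M n ∘ t = w.2}

/-- Every fact of `M` at `x` is matched by a fact at `y` with the same level-`n` types: one half of
having the same level-`n + 1` type. -/
def Simulated (M : Inst σ α) (n : ℕ) (x y : α) : Prop :=
  ∀ ⦃R⦄ ⦃t : Fin (σ.ar R) → α⦄, (⟨R, t⟩ : Fact σ α) ∈ M → ∀ i, t i = x →
    ∃ t', (⟨R, t'⟩ : Fact σ α) ∈ M ∧ t' i = y ∧ ∀ j, bisimType M n (t' j) = bisimType M n (t j)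

section BisimType

variable {M : Inst σ α} {n : ℕ} {x y : α}

lemma bisimType_subset_iff :
    (show Set (Σ p : σ.Pos, (Fin (σ.ar p.1) → BisimType σ n)) from bisimType M (n + 1) x) ⊆
      bisimType M (n + 1) y ↔ Simulated M n x y := by
  constructor
  · intro h R t ht i hi
    obtain ⟨t', ht', hi', he⟩ := h (a := ⟨⟨R, i⟩, bisimType M n ∘ t⟩) ⟨t, ht, hi, rfl⟩
    exact ⟨t', ht', hi', congrFun he⟩
  · rintro h ⟨⟨R, i⟩, u⟩ ⟨t, ht, hi, hu⟩
    obtain ⟨t', ht', hi', he⟩ := h ht i hi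
    exact ⟨t', ht', hi', (funext he).trans hu⟩

lemma bisimType_succ_eq_iff :
    bisimType M (n + 1) x = bisimType M (n + 1) y ↔ Simulated M n x y ∧ Simulated M n y x := by
  rw [← bisimType_subset_iff, ← bisimType_subset_iff]
  exact Set.Subset.antisymm_iff

lemma bisimType_eq_of_succ (h : bisimType M (n + 1) x = bisimType M (n + 1) y) :
    bisimType M n x = bisimType M n y := by
  induction n generalizing x y with
  | zero => rfl
  | succ n ih =>
    have simulated_pred {x y : α} (h : Simulated M (n + 1) x y) : Simulated M n x y := by
      intro R t ht i hi
      obtain ⟨t', ht', hi', he⟩ := h ht i hi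
      exact ⟨t', ht', hi', fun j => ih (he j)⟩
    rw [bisimType_succ_eq_iff] at h ⊢
    exact ⟨simulated_pred h.1, simulated_pred h.2⟩

lemma bisimType_eq_of_le {m : ℕ} (hmn : m ≤ n) (h : bisimType M n x = bisimType M n y) :
    bisimType M m x = bisimType M m y := by
  induction hmn with
  | refl => exact h
  | step _ ih => exact ih (bisimType_eq_of_succ h)

lemma exists_fact_through {R : σ.Rel} {P : Set (Fin (σ.ar R))} (hP : P.Subsingleton)
    {t₀ b : Fin (σ.ar R) → α} (ht₀ : (⟨R, t₀⟩ : Fact σ α) ∈ M)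
    (hb : ∀ i ∈ P, bisimType M (n + 1) (t₀ i) = bisimType M (n + 1) (b i)) :
    ∃ t, (⟨R, t⟩ : Fact σ α) ∈ M ∧ (∀ j, bisimType M n (t j) = bisimType M n (t₀ j)) ∧
      ∀ i ∈ P, t i = b i := by
  rcases hP.eq_empty_or_singleton with rfl | ⟨i, rfl⟩
  · exact ⟨t₀, ht₀, fun _ => rfl, by simp⟩
  · obtain ⟨t, ht, hi, he⟩ := (bisimType_succ_eq_iff.1 (hb i rfl)).1 ht₀ i rfl
    exact ⟨t, ht, he, fun _ hj => by rwa [Set.mem_singleton_iff.1 hj]⟩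

/-- The quotient of `M` in which elements with the same level-`k` type are identified. -/
def typeQuotient (M : Inst σ α) (k : ℕ) : Inst σ (BisimType σ k) := Fact.map (bisimType M k) '' M

end BisimType

/-- The variables of an atom occurrence of `q`. -/
def atomVars (q : CQ σ) (A : Fin q.atoms.length) : Set (Fin q.nv) := Set.range (q.atoms.get A).2

/-- The variables of `A` shared with another atom of `S`. -/
def sharedVars (q : CQ σ) (S : Finset (Fin q.atoms.length)) (A : Fin q.atoms.length) :
    Set (Fin q.nv) :=
  {x ∈ atomVars q A | ∃ B ∈ S, B ≠ A ∧ x ∈ atomVars q B}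

lemma injective_window {ι : Type*} {f : ℕ → ι} {d : ℕ}
    (hf : ∀ e, 0 < e → e < d → ∀ i, f i ≠ f (i + e)) (s : ℕ) :
    Function.Injective fun j : Fin d => f (s + j) := by
  have ne_of_lt {j j' : Fin d} (hlt : (j : ℕ) < j') : f (s + j) ≠ f (s + j') := by
    have := hf (j' - j) (by omega) (by omega) (s + j)
    rwa [show s + (j : ℕ) + (j' - j) = s + j' by omega] at this
  intro j j' he
  by_contra hne
  rcases lt_or_gt_of_ne (Fin.val_ne_of_ne hne) with hlt | hlt
  · exact ne_of_lt hlt he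
  · exact ne_of_lt hlt he.symm

section Berge

variable {q : CQ σ} {A : ℕ → Fin q.atoms.length} {x : ℕ → Fin q.nv}

lemma hasBergeCycle_of_closed_walk {m s : ℕ}
    (hA : Function.Injective fun j : Fin (m + 2) => A (s + j))
    (hx : Function.Injective fun j : Fin (m + 2) => x (s + j))
    (hxA : ∀ i, x i ∈ atomVars q (A i)) (hxA' : ∀ i, x i ∈ atomVars q (A (i + 1)))
    (hclosed : x (s + (m + 1)) ∈ atomVars q (A s)) : HasBergeCycle q := by
  refine ⟨m, _, hA, _, hx, fun i => ⟨hxA _, ?_⟩⟩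
  change x (s + i) ∈ atomVars q (A (s + (i + 1 : Fin (m + 2))))
  induction i using Fin.lastCases with
  | last => simpa using hclosed
  | cast i => simpa [← add_assoc] using hxA' (s + i)

lemma hasBergeCycle_of_walk (hxA : ∀ i, x i ∈ atomVars q (A i))
    (hxA' : ∀ i, x i ∈ atomVars q (A (i + 1)))
    (hA : ∀ i, A i ≠ A (i + 1)) (hx : ∀ i, x i ≠ x (i + 1)) : HasBergeCycle q := by
  classical
  have exists_repetition : ∃ d, 0 < d ∧ ∃ i, A i = A (i + d) ∨ x i = x (i + d) := by
    obtain ⟨i, -, j, -, hij, he⟩ := Set.infinite_univ.exists_lt_map_eq_of_mapsTo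
      (Set.mapsTo_univ A Set.univ) Set.finite_univ
    exact ⟨j - i, Nat.sub_pos_of_lt hij, i, Or.inl (by rwa [Nat.add_sub_cancel' hij.le])⟩
  obtain ⟨hd, i, hi⟩ := Nat.find_spec exists_repetition
  have minimal := fun e => Nat.find_min (m := e) exists_repetition
  generalize Nat.find exists_repetition = d at hd hi minimal
  push Not at minimal
  obtain ⟨m, rfl⟩ : ∃ m, d = m + 2 := by
    obtain _ | _ | m := d
    · exact absurd hd (lt_irrefl 0)
    · exact absurd hi (not_or.2 ⟨hA i, hx i⟩)
    · exact ⟨m, rfl⟩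
  have injective_A := injective_window fun e he hed i => (minimal e hed he i).1
  have injective_x := injective_window fun e he hed i => (minimal e hed he i).2
  rcases hi with hi | hi
  · refine hasBergeCycle_of_closed_walk (injective_A i) (injective_x i) hxA hxA' ?_
    exact hi ▸ hxA' (i + (m + 1))
  · refine hasBergeCycle_of_closed_walk (injective_A (i + 1)) (injective_x (i + 1)) hxA hxA' ?_
    rw [show i + 1 + (m + 1) = i + (m + 2) by omega, ← hi]
    exact hxA' i

end Berge

lemma exists_subsingleton_sharedVars {q : CQ σ} (hq : ¬ HasBergeCycle q)
    {S : Finset (Fin q.atoms.length)} (hS : S.Nonempty) :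
    ∃ A ∈ S, (sharedVars q S A).Subsingleton := by
  by_contra! hcon
  have exists_next (s : S × Fin q.nv) : ∃ s' : S × Fin q.nv, s.1 ≠ s'.1 ∧ s.2 ≠ s'.2 ∧
      s'.2 ∈ atomVars q s.1 ∧ s'.2 ∈ atomVars q s'.1 := by
    obtain ⟨v, ⟨hv, B, hB, hBA, hvB⟩, hne⟩ := (hcon s.1 s.1.2).exists_ne s.2
    exact ⟨(⟨B, hB⟩, v), fun h => hBA (congrArg Subtype.val h).symm, hne.symm, hv, hvB⟩
  choose next hatom hvar hleft hright using exists_next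
  obtain ⟨A₀, hA₀⟩ := hS
  let walk : ℕ → S × Fin q.nv := fun n => next^[n] (⟨A₀, hA₀⟩, (q.atoms.get A₀).2 ⟨0, σ.ar_pos _⟩)
  have walk_succ (n : ℕ) : walk (n + 1) = next (walk n) := Function.iterate_succ_apply' ..
  refine hq (hasBergeCycle_of_walk (A := fun n => (walk n).1) (x := fun n => (walk (n + 1)).2)
    (fun i => ?_) (fun i => ?_) (fun i h => ?_) (fun i => ?_)) <;> simp only [walk_succ] at *
  · exact hleft _
  · exact hright _
  · exact hatom _ (Subtype.ext h)
  · exact hvar _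

section Lift

variable {M : Inst σ α} {q : CQ σ} {S : Finset (Fin q.atoms.length)} {n k : ℕ} {w f : Fin q.nv → α}

/-- `f` maps the atoms of `S` to facts of `M` and agrees on their variables with `w` up to
level-`n` types. -/
def IsPartialLift (M : Inst σ α) (q : CQ σ) (S : Finset (Fin q.atoms.length)) (n : ℕ)
    (w f : Fin q.nv → α) : Prop :=
  ∀ A ∈ S, Fact.map f (q.atoms.get A) ∈ M ∧
    ∀ x ∈ atomVars q A, bisimType M n (f x) = bisimType M n (w x)

lemma IsPartialLift.exists_of_erase {A : Fin q.atoms.length}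
    (hA : (sharedVars q S A).Subsingleton) (hinj : Function.Injective (q.atoms.get A).2)
    (hw : Fact.map (bisimType M (n + 1) ∘ w) (q.atoms.get A) ∈ typeQuotient M (n + 1))
    (hf : IsPartialLift M q (S.erase A) (n + 1) w f) : ∃ f', IsPartialLift M q S n w f' := by
  obtain ⟨t₀, ht₀, he₀⟩ := mk_mem_image_map.1 hw
  have type_t₀ (j) : bisimType M (n + 1) (t₀ j) = bisimType M (n + 1) (w ((q.atoms.get A).2 j)) :=
    congrFun he₀ j
  obtain ⟨t, ht, htype, hshared⟩ := exists_fact_through (n := n)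
    (b := f ∘ (q.atoms.get A).2) (hA.preimage hinj) ht₀ (by
      rintro i ⟨-, B, hB, hBA, hx⟩
      exact (type_t₀ i).trans ((hf B (Finset.mem_erase.2 ⟨hBA, hB⟩)).2 _ hx).symm)
  let f' := Function.extend (q.atoms.get A).2 t f
  have f'_atom (j) : f' ((q.atoms.get A).2 j) = t j := hinj.extend_apply _ _ _
  have f'_old {B} (hB : B ∈ S) (hBA : B ≠ A) {x} (hx : x ∈ atomVars q B) : f' x = f x := by
    by_cases hxA : ∃ j, (q.atoms.get A).2 j = x
    · obtain ⟨j, rfl⟩ := hxA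
      exact (f'_atom j).trans (hshared j ⟨⟨j, rfl⟩, B, hB, hBA, hx⟩)
    · exact Function.extend_apply' _ _ _ hxA
  refine ⟨f', fun B hB => ?_⟩
  obtain rfl | hBA := eq_or_ne B A
  · constructor
    · rwa [Fact.map, show f' ∘ (q.atoms.get B).2 = t from funext f'_atom]
    · rintro _ ⟨j, rfl⟩
      rw [f'_atom, htype]
      exact bisimType_eq_of_succ (type_t₀ j)
  · obtain ⟨hfact, hsame⟩ := hf B (Finset.mem_erase.2 ⟨hBA, hB⟩)
    constructor
    · rwa [Fact.map, show f' ∘ (q.atoms.get B).2 = f ∘ (q.atoms.get B).2 from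
        funext fun j => f'_old hB hBA ⟨j, rfl⟩]
    · intro x hx
      rw [f'_old hB hBA hx]
      exact bisimType_eq_of_succ (hsame x hx)

lemma map_mem_typeQuotient_of_le {F : Fact σ (Fin q.nv)} (hnk : n ≤ k)
    (hw : Fact.map (bisimType M k ∘ w) F ∈ typeQuotient M k) :
    Fact.map (bisimType M n ∘ w) F ∈ typeQuotient M n := by
  obtain ⟨t, ht, he⟩ := mk_mem_image_map.1 hw
  exact mk_mem_image_map.2 ⟨t, ht, funext fun j => bisimType_eq_of_le hnk (congrFun he j)⟩

lemma exists_isPartialLift (hq : IsACQ q)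
    (hw : ∀ F ∈ q.atoms, Fact.map (bisimType M k ∘ w) F ∈ typeQuotient M k)
    (S : Finset (Fin q.atoms.length)) (hn : S.card + n = k) : ∃ f, IsPartialLift M q S n w f := by
  classical
  induction hm : S.card generalizing S n with
  | zero => exact ⟨w, fun A hA => by simp_all⟩
  | succ m ih =>
    have hS : S.Nonempty := Finset.card_pos.1 (by omega)
    obtain ⟨A, hA, hshared⟩ := exists_subsingleton_sharedVars hq.1 hS
    have hcard := Finset.card_erase_of_mem hA
    obtain ⟨f, hf⟩ := ih (S.erase A) (n := n + 1) (by omega) (by omega)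
    have hmem : q.atoms.get A ∈ q.atoms := List.get_mem ..
    exact hf.exists_of_erase hshared (hq.2 _ hmem)
      (map_mem_typeQuotient_of_le (by omega) (hw _ hmem))

/-- Peeling off leaf atoms one at a time, a match of the quotient lifts to `M`: each atom is
replaced by a fact through the at most one element shared with the atoms already lifted, at the
cost of one level of agreement. -/
theorem satCQ_of_satCQ_typeQuotient (hq : IsACQ q) (hk : q.size ≤ k)
    (h : satCQ (typeQuotient M k) q) : satCQ M q := by
  obtain ⟨g, hg⟩ := h
  have exists_representative (x : Fin q.nv) : ∃ a, bisimType M k a = g x := by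
    obtain ⟨F, hF, i, rfl⟩ := q.vars_occur x
    obtain ⟨t, -, he⟩ := mk_mem_image_map.1 (hg F hF)
    exact ⟨t i, congrFun he i⟩
  choose w hw using exists_representative
  obtain rfl : bisimType M k ∘ w = g := funext hw
  obtain ⟨f, hf⟩ := exists_isPartialLift (n := k - q.size) hq hg Finset.univ
    (by simpa [CQ.size] using Nat.add_sub_cancel' hk)
  refine ⟨f, fun F hF => ?_⟩
  obtain ⟨A, rfl⟩ := List.get_of_mem hF
  exact (hf A (Finset.mem_univ A)).1

end Lift

/-! ### The oblivious chase -/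

section Chase

variable {le : σ.Pos → σ.Pos → Prop} {I₀ : Inst σ ℕ} {x y z z' : CEl σ} {p q : σ.Pos} {n : ℕ}

/-- The element `x` has to occur at position `p` in the chase of `I₀` by the inclusions `le`. -/
def Wants (le : σ.Pos → σ.Pos → Prop) (I₀ : Inst σ ℕ) : CEl σ → σ.Pos → Prop
  | .base a, q => ∃ p, le p q ∧ a ∈ proj I₀ p
  | .null x p r, q => Wants le I₀ x p ∧ r.1 = p.1 ∧ r ≠ p ∧ le r q

open Classical in
/-- The tuple created by the chase to put `x` at position `p`. -/
def chaseTuple (x : CEl σ) (p : σ.Pos) (i : Fin (σ.ar p.1)) : CEl σ :=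
  if i = p.2 then x else .null x p ⟨p.1, i⟩

/-- The oblivious chase of `I₀` by the inclusions `le`: a fact is created for every `x` and `p` with
`Wants le I₀ x p`, whether or not `x` already occurs at `p`. -/
def obliviousChase (le : σ.Pos → σ.Pos → Prop) (I₀ : Inst σ ℕ) : Inst σ (CEl σ) :=
  Fact.map CEl.base '' I₀ ∪ {F | ∃ x p, Wants le I₀ x p ∧ F = ⟨p.1, chaseTuple x p⟩}

lemma Wants.trans [IsTrans _ le] (hx : Wants le I₀ x p) (hpq : le p q) : Wants le I₀ x q := by
  cases x with
  | base a =>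
    obtain ⟨r, hrp, ha⟩ := hx
    exact ⟨r, _root_.trans hrp hpq, ha⟩
  | null x p' r => exact ⟨hx.1, hx.2.1, hx.2.2.1, _root_.trans hx.2.2.2 hpq⟩

lemma chaseTuple_self (x : CEl σ) (p : σ.Pos) : chaseTuple x p p.2 = x := if_pos rfl

lemma chaseTuple_of_ne {j : Fin (σ.ar p.1)} (hj : j ≠ p.2) :
    chaseTuple x p j = .null x p ⟨p.1, j⟩ := if_neg hj

lemma chaseTuple_mem (hx : Wants le I₀ x p) :
    (⟨p.1, chaseTuple x p⟩ : Fact σ (CEl σ)) ∈ obliviousChase le I₀ := Or.inr ⟨x, p, hx, rfl⟩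

lemma wants_chaseTuple_iff {j : Fin (σ.ar p.1)} (hj : j ≠ p.2) :
    Wants le I₀ (chaseTuple x p j) q ↔ Wants le I₀ x p ∧ le ⟨p.1, j⟩ q := by
  obtain ⟨R, i⟩ := p
  simp only [chaseTuple_of_ne hj, Wants, true_and, ne_eq, Sigma.mk.injEq, heq_eq_eq]
  exact and_congr_right fun _ => and_iff_right hj

lemma wants_of_mem [Std.Refl le] {R : σ.Rel} {t : Fin (σ.ar R) → CEl σ}
    (ht : (⟨R, t⟩ : Fact σ (CEl σ)) ∈ obliviousChase le I₀) (i : Fin (σ.ar R)) :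
    Wants le I₀ (t i) ⟨R, i⟩ := by
  rcases ht with ht | ⟨x, p, hx, he⟩
  · obtain ⟨u, hu, rfl⟩ := mk_mem_image_map.1 ht
    exact ⟨⟨R, i⟩, refl_of le _, mem_proj_of_mem hu i⟩
  · cases he
    obtain rfl | hi := eq_or_ne i p.2
    · rwa [chaseTuple_self]
    · exact (wants_chaseTuple_iff hi).2 ⟨hx, refl_of le _⟩

lemma eq_chaseTuple_of_mem {j : Fin (σ.ar p.1)} (hj : j ≠ p.2) {R : σ.Rel}
    {t : Fin (σ.ar R) → CEl σ} (ht : (⟨R, t⟩ : Fact σ (CEl σ)) ∈ obliviousChase le I₀)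
    {i : Fin (σ.ar R)} (hi : t i = chaseTuple x p j) :
    (Wants le I₀ (t i) ⟨R, i⟩ ∧ t = chaseTuple (t i) ⟨R, i⟩) ∨
      (⟨R, t⟩ : Fact σ (CEl σ)) = ⟨p.1, chaseTuple x p⟩ ∧ (⟨R, i⟩ : σ.Pos) = ⟨p.1, j⟩ := by
  rcases ht with ht | ⟨y, q, hy, he⟩
  · obtain ⟨u, -, rfl⟩ := mk_mem_image_map.1 ht
    simp [chaseTuple_of_ne hj] at hi
  · cases he
    obtain rfl | hiq := eq_or_ne i q.2
    · rw [chaseTuple_self]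
      exact Or.inl ⟨hy, rfl⟩
    · rw [chaseTuple_of_ne hj, chaseTuple_of_ne hiq] at hi
      injection hi with hxy hpq hpos
      subst hxy hpq
      exact Or.inr ⟨rfl, hpos⟩

/-! ### Types of chase elements -/

lemma simulated_chaseTuple [IsTrans _ le]
    (hcongr : ∀ {z z' : CEl σ} {q}, Wants le I₀ z q → Wants le I₀ z' q →
      bisimType (obliviousChase le I₀) n z = bisimType (obliviousChase le I₀) n z' →
      ∀ l, bisimType (obliviousChase le I₀) n (chaseTuple z q l) =
        bisimType (obliviousChase le I₀) n (chaseTuple z' q l))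
    {j : Fin (σ.ar p.1)} (hj : j ≠ p.2) (hy : Wants le I₀ y ⟨p.1, j⟩)
    (hxy : bisimType (obliviousChase le I₀) n y =
      bisimType (obliviousChase le I₀) n (chaseTuple x p j))
    {t' : Fin (σ.ar p.1) → CEl σ}
    (ht' : (⟨p.1, t'⟩ : Fact σ (CEl σ)) ∈ obliviousChase le I₀) (ht'y : t' j = y)
    (hcreator : ∀ l, bisimType (obliviousChase le I₀) n (t' l) =
      bisimType (obliviousChase le I₀) n (chaseTuple x p l)) :
    Simulated (obliviousChase le I₀) n (chaseTuple x p j) y := by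
  intro R t ht i hi
  rcases eq_chaseTuple_of_mem hj ht hi with ⟨hx, ht⟩ | ⟨hF, hpos⟩
  · rw [hi] at hx ht
    have hyi : Wants le I₀ y ⟨R, i⟩ := hy.trans ((wants_chaseTuple_iff hj).1 hx).2
    refine ⟨chaseTuple y ⟨R, i⟩, chaseTuple_mem hyi, chaseTuple_self y ⟨R, i⟩, fun l => ?_⟩
    rw [ht]
    exact hcongr hyi hx hxy l
  · cases hF
    cases hpos
    exact ⟨t', ht', ht'y, hcreator⟩

lemma bisimType_chaseTuple_congr [Std.Refl le] [IsTrans _ le] (hz : Wants le I₀ z p)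
    (hz' : Wants le I₀ z' p)
    (he : bisimType (obliviousChase le I₀) n z = bisimType (obliviousChase le I₀) n z')
    (j : Fin (σ.ar p.1)) :
    bisimType (obliviousChase le I₀) n (chaseTuple z p j) =
      bisimType (obliviousChase le I₀) n (chaseTuple z' p j) := by
  induction n generalizing z z' p with
  | zero => rfl
  | succ n ih =>
    have simulated {z z' : CEl σ} (hj : j ≠ p.2) (hz : Wants le I₀ z p) (hz' : Wants le I₀ z' p)
        (he : bisimType (obliviousChase le I₀) n z = bisimType (obliviousChase le I₀) n z') :
        Simulated (obliviousChase le I₀) n (chaseTuple z p j) (chaseTuple z' p j) :=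
      simulated_chaseTuple ih hj (wants_of_mem (chaseTuple_mem hz') j) (ih hz' hz he.symm j)
        (chaseTuple_mem hz') rfl (ih hz' hz he.symm)
    obtain rfl | hj := eq_or_ne j p.2
    · rwa [chaseTuple_self, chaseTuple_self]
    · have he' := bisimType_eq_of_succ he
      exact bisimType_succ_eq_iff.2 ⟨simulated hj hz hz' he', simulated hj hz' hz he'.symm⟩

/-- `z` has to occur at position `p` and was created by at least `n` consecutive chase steps, the
last of which introduced it at a position equivalent to `p`. -/
def IsGeneric (le : σ.Pos → σ.Pos → Prop) (I₀ : Inst σ ℕ) : ℕ → CEl σ → σ.Pos → Prop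
  | 0, z, p => Wants le I₀ z p
  | n + 1, z, p => ∃ x q, ∃ j : Fin (σ.ar q.1), j ≠ q.2 ∧ IsGeneric le I₀ n x q ∧
      z = chaseTuple x q j ∧ AntisymmRel le ⟨q.1, j⟩ p

lemma IsGeneric.wants (hz : IsGeneric le I₀ n z p) : Wants le I₀ z p := by
  induction n generalizing z p with
  | zero => exact hz
  | succ n ih =>
    obtain ⟨x, q, j, hj, hx, rfl, hjp⟩ := hz
    exact (wants_chaseTuple_iff hj).2 ⟨ih hx, hjp.1⟩

lemma IsGeneric.pred (hz : IsGeneric le I₀ (n + 1) z p) : IsGeneric le I₀ n z p := by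
  induction n generalizing z p with
  | zero => exact hz.wants
  | succ n ih =>
    obtain ⟨x, q, j, hj, hx, rfl, hjp⟩ := hz
    exact ⟨x, q, j, hj, ih hx, rfl, hjp⟩

lemma IsGeneric.congr_pos [IsTrans _ le] (hz : IsGeneric le I₀ n z p) (hpq : AntisymmRel le p q) :
    IsGeneric le I₀ n z q := by
  cases n with
  | zero => exact Wants.trans hz hpq.1
  | succ n =>
    obtain ⟨x, r, j, hj, hx, rfl, hjp⟩ := hz
    exact ⟨x, r, j, hj, hx, rfl, hjp.trans hpq⟩

lemma IsGeneric.chaseTuple [Std.Refl le] (hx : IsGeneric le I₀ n x p) {j : Fin (σ.ar p.1)}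
    (hj : j ≠ p.2) : IsGeneric le I₀ (n + 1) (chaseTuple x p j) ⟨p.1, j⟩ :=
  ⟨x, p, j, hj, hx, rfl, AntisymmRel.refl le _⟩

/-- The fact created at `z'` for the position of `z` matches the fact that created `z`: its other
elements are generic at the same positions as those of the latter. -/
lemma IsGeneric.simulated [Std.Refl le] [IsTrans _ le]
    (ih : ∀ {z z' : CEl σ} {p}, IsGeneric le I₀ (n + 1) z p → IsGeneric le I₀ (n + 1) z' p →
      bisimType (obliviousChase le I₀) n z = bisimType (obliviousChase le I₀) n z')
    (hz : IsGeneric le I₀ (n + 2) z p) (hz' : IsGeneric le I₀ (n + 2) z' p) :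
    Simulated (obliviousChase le I₀) n z z' := by
  have htype := ih hz'.pred hz.pred
  obtain ⟨x, ⟨R, i⟩, j, hj, hx, rfl, hjp⟩ := hz
  have hz'j : IsGeneric le I₀ n z' ⟨R, j⟩ := hz'.pred.pred.congr_pos hjp.symm
  refine simulated_chaseTuple bisimType_chaseTuple_congr hj hz'j.wants htype
    (t' := FQA.chaseTuple z' ⟨R, j⟩) (chaseTuple_mem (p := ⟨R, j⟩) hz'j.wants)
    (chaseTuple_self z' ⟨R, j⟩) fun l => ?_
  obtain rfl | hjl := eq_or_ne j l
  · exact (congrArg _ (chaseTuple_self z' ⟨R, j⟩)).trans htype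
  have hgeneric := hz'j.chaseTuple (p := ⟨R, j⟩) hjl.symm
  obtain rfl | hil := eq_or_ne i l
  · exact (ih hgeneric hx).trans (congrArg _ (chaseTuple_self x ⟨R, i⟩).symm)
  · exact ih hgeneric (hx.pred.chaseTuple (p := ⟨R, i⟩) hil.symm)

theorem IsGeneric.bisimType_eq [Std.Refl le] [IsTrans _ le] (hz : IsGeneric le I₀ (n + 1) z p)
    (hz' : IsGeneric le I₀ (n + 1) z' p) :
    bisimType (obliviousChase le I₀) n z = bisimType (obliviousChase le I₀) n z' := by
  induction n generalizing z z' p with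
  | zero => rfl
  | succ n ih =>
    exact bisimType_succ_eq_iff.2 ⟨IsGeneric.simulated ih hz hz', IsGeneric.simulated ih hz' hz⟩

/-! ### Universality of the chase -/

open Classical in
/-- The elements of a fact of `J` with `b` at position `p`, indexed by the positions of the
signature; the value `0` is used where there is none. -/
noncomputable def fill (J : Inst σ ℕ) (p : σ.Pos) (b : ℕ) : σ.Pos → ℕ :=
  if h : b ∈ proj J p then Function.extend (Sigma.mk p.1) h.choose 0 else 0

lemma exists_fact_eq_fill {J : Inst σ ℕ} {b : ℕ} (hb : b ∈ proj J p) :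
    ∃ t, (⟨p.1, t⟩ : Fact σ ℕ) ∈ J ∧ t p.2 = b ∧ ∀ i, t i = fill J p b ⟨p.1, i⟩ := by
  obtain ⟨hmem, hself⟩ := Exists.choose_spec hb
  refine ⟨_, hmem, hself, fun i => ?_⟩
  rw [fill, dif_pos hb, sigma_mk_injective.extend_apply]

/-- The homomorphism from the chase to a model `J` of the inclusions. -/
noncomputable def chaseHom (J : Inst σ ℕ) : CEl σ → ℕ
  | .base a => a
  | .null x p r => fill J p (chaseHom J x) r

lemma chaseHom_mem_proj {J : Inst σ ℕ} (hJ : I₀ ⊆ J) (hle : ∀ p q, le p q → proj J p ⊆ proj J q)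
    (hx : Wants le I₀ x p) : chaseHom J x ∈ proj J p := by
  induction x generalizing p with
  | base a =>
    obtain ⟨q, hqp, ha⟩ := hx
    exact hle q p hqp (proj_mono hJ q ha)
  | null x q r ih =>
    obtain ⟨R, i⟩ := r
    obtain ⟨hx, rfl, -, hrp⟩ := hx
    obtain ⟨t, ht, -, hfill⟩ := exists_fact_eq_fill (ih hx)
    exact hle _ p hrp ⟨t, ht, hfill i⟩

theorem mapsTo_chaseHom {J : Inst σ ℕ} (hJ : I₀ ⊆ J)
    (hle : ∀ p q, le p q → proj J p ⊆ proj J q) :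
    Set.MapsTo (Fact.map (chaseHom J)) (obliviousChase le I₀) J := by
  rintro _ (⟨F, hF, rfl⟩ | ⟨x, p, hx, rfl⟩)
  · exact hJ hF
  · obtain ⟨t, ht, hself, hfill⟩ := exists_fact_eq_fill (chaseHom_mem_proj hJ hle hx)
    suffices chaseHom J ∘ chaseTuple x p = t by rwa [Fact.map, this]
    funext i
    obtain rfl | hi := eq_or_ne i p.2
    · rw [Function.comp_apply, chaseTuple_self, hself]
    · rw [Function.comp_apply, chaseTuple_of_ne hi, hfill, chaseHom]

end Chase

theorem satCQ_of_mapsTo_typeQuotient {le : σ.Pos → σ.Pos → Prop} {I₀ J : Inst σ ℕ} {I : Inst σ α}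
    {k : ℕ} {h : α → BisimType σ k} {q : CQ σ}
    (hh : Set.MapsTo (Fact.map h) I (typeQuotient (obliviousChase le I₀) k))
    (hJ : I₀ ⊆ J) (hle : ∀ p q, le p q → proj J p ⊆ proj J q)
    (hq : IsACQ q) (hk : q.size ≤ k) (hI : satCQ I q) : satCQ J q :=
  (satCQ_of_satCQ_typeQuotient hq hk (hI.map hh)).map (mapsTo_chaseHom hJ hle)

/-! ### Functional dependencies and cardinalities -/

section Cardinality

variable {I : Inst σ α} {R : σ.Rel} {i j : Fin (σ.ar R)}

/-- The projection of `I` to the pair of positions `R^i`, `R^j`. -/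
def pairProj (I : Inst σ α) (R : σ.Rel) (i j : Fin (σ.ar R)) : Set (α × α) :=
  (fun t => (t i, t j)) '' (Sigma.mk R ⁻¹' I)

lemma finite_pairProj (hI : I.Finite) : (pairProj I R i j).Finite :=
  (hI.preimage sigma_mk_injective.injOn).image _

lemma fst_image_pairProj : Prod.fst '' pairProj I R i j = proj I ⟨R, i⟩ :=
  Set.image_image _ _ _

lemma snd_image_pairProj : Prod.snd '' pairProj I R i j = proj I ⟨R, j⟩ :=
  Set.image_image _ _ _

lemma SatFD.ncard_pairProj (h : SatFD I R i j) :
    (pairProj I R i j).ncard = (proj I ⟨R, i⟩).ncard := by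
  rw [← fst_image_pairProj (j := j), Set.InjOn.ncard_image]
  rintro _ ⟨t, ht, rfl⟩ _ ⟨u, hu, rfl⟩ htu
  exact Prod.ext htu (h t u ht hu htu)

lemma ncard_proj_le_ncard_pairProj (hI : I.Finite) :
    (proj I ⟨R, j⟩).ncard ≤ (pairProj I R i j).ncard :=
  snd_image_pairProj (i := i) ▸ Set.ncard_image_le (finite_pairProj hI)

lemma SatFD.ncard_proj_le (hI : I.Finite) (h : SatFD I R i j) :
    (proj I ⟨R, j⟩).ncard ≤ (proj I ⟨R, i⟩).ncard :=
  h.ncard_pairProj ▸ ncard_proj_le_ncard_pairProj hI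

lemma SatFD.symm_of_ncard_proj_le (hI : I.Finite) (h : SatFD I R i j)
    (hcard : (proj I ⟨R, i⟩).ncard ≤ (proj I ⟨R, j⟩).ncard) : SatFD I R j i := by
  have hinj : Set.InjOn Prod.snd (pairProj I R i j) := by
    refine Set.injOn_of_ncard_image_eq ?_ (finite_pairProj hI)
    rw [snd_image_pairProj]
    exact (ncard_proj_le_ncard_pairProj hI).antisymm (h.ncard_pairProj.trans_le hcard)
  intro t u ht hu htu
  exact congrArg Prod.fst (hinj ⟨t, ht, rfl⟩ ⟨u, hu, rfl⟩ htu)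

end Cardinality

/-! ### Ranking the positions -/

section ReachRank

variable {ι : Type*} [Finite ι] {r : ι → ι → Prop} {a b : ι}

/-- The number of elements from which `a` is reachable. It is monotone along `r`, and an
edge between elements of equal rank lies on a cycle. -/
noncomputable def reachRank (r : ι → ι → Prop) (a : ι) : ℕ :=
  {b | Relation.ReflTransGen r b a}.ncard

lemma reachRank_le (h : r a b) : reachRank r a ≤ reachRank r b :=
  Set.ncard_le_ncard (fun _ hc => hc.tail h) (Set.toFinite _)

lemma reflTransGen_of_reachRank_eq (h : r a b) (he : reachRank r a = reachRank r b) :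
    Relation.ReflTransGen r b a := by
  have heq : {c | Relation.ReflTransGen r c a} = {c | Relation.ReflTransGen r c b} :=
    Set.eq_of_subset_of_ncard_le (fun _ hc => hc.tail h) he.ge (Set.toFinite _)
  exact heq.ge Relation.ReflTransGen.refl

end ReachRank

/-- Reflexive and transitive unary inclusion and functional dependencies together with a rank of the
positions that is monotone along the size comparisons they force in finite instances: a dependency
between positions of equal rank holds in both directions. -/
structure RankedDeps (σ : Sig) where
  uid : σ.Pos → σ.Pos → Prop
  fd : ∀ R : σ.Rel, Fin (σ.ar R) → Fin (σ.ar R) → Prop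
  rank : σ.Pos → ℕ
  uid_refl : ∀ p, uid p p
  uid_trans : ∀ p q r, uid p q → uid q r → uid p r
  fd_refl : ∀ R i, fd R i i
  fd_trans : ∀ {R i j l}, fd R i j → fd R j l → fd R i l
  rank_le_of_uid : ∀ {p q}, uid p q → rank p ≤ rank q
  uid_symm_of_rank_eq : ∀ {p q}, uid p q → rank p = rank q → uid q p
  rank_le_of_fd : ∀ {R i j}, fd R i j → rank ⟨R, j⟩ ≤ rank ⟨R, i⟩
  fd_symm_of_rank_eq : ∀ {R i j}, fd R i j → rank ⟨R, j⟩ = rank ⟨R, i⟩ → fd R j i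

instance (D : RankedDeps σ) : Std.Refl D.uid := ⟨D.uid_refl⟩

instance (D : RankedDeps σ) : IsTrans σ.Pos D.uid := ⟨D.uid_trans⟩

section FinitelyClosed

variable {Su : Set (UID σ)} {Sf : Set (UFD σ)} {p q : σ.Pos} {R : σ.Rel} {i j : Fin (σ.ar R)}

/-- The relation between positions given by the UIDs `Su` and the trivial inclusions. -/
def reflUID (Su : Set (UID σ)) (p q : σ.Pos) : Prop := p = q ∨ ∃ τ ∈ Su, τ.src = p ∧ τ.dst = q

/-- The relation between the positions of `R` given by the UFDs `Sf` and the trivial ones. -/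
def reflFD (Sf : Set (UFD σ)) (R : σ.Rel) (i j : Fin (σ.ar R)) : Prop :=
  i = j ∨ ∃ hne : i ≠ j, (⟨R, i, j, hne⟩ : UFD σ) ∈ Sf

lemma forall_satUID_iff {J : Inst σ α} :
    (∀ τ ∈ Su, satUID J τ) ↔ ∀ p q, reflUID Su p q → proj J p ⊆ proj J q := by
  constructor
  · rintro hJ p q (rfl | ⟨τ, hτ, rfl, rfl⟩)
    · exact subset_rfl
    · exact hJ τ hτ
  · exact fun hJ τ hτ => hJ _ _ (Or.inr ⟨τ, hτ, rfl, rfl⟩)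

lemma forall_satUFD_iff {J : Inst σ α} :
    (∀ φ ∈ Sf, satUFD J φ) ↔ ∀ R i j, reflFD Sf R i j → SatFD J R i j := by
  constructor
  · rintro hJ R i j (rfl | ⟨hne, hφ⟩)
    · exact fun _ _ _ _ => id
    · exact hJ _ hφ
  · exact fun hJ φ hφ => hJ _ _ _ (Or.inr ⟨φ.ne, hφ⟩)

lemma reflUID_of_finite_models (hclU : ∀ τ : UID σ, finImpUIDu Su Sf τ → τ ∈ Su)
    (h : ∀ J : Inst σ ℕ, J.Finite → satAllU J Su Sf → proj J p ⊆ proj J q) : reflUID Su p q :=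
  or_iff_not_imp_left.2 fun hne => ⟨⟨p, q, hne⟩, hclU _ h, rfl, rfl⟩

lemma reflFD_of_finite_models (hclF : ∀ φ : UFD σ, finImpUFDu Su Sf φ → φ ∈ Sf)
    (h : ∀ J : Inst σ ℕ, J.Finite → satAllU J Su Sf → SatFD J R i j) : reflFD Sf R i j :=
  or_iff_not_imp_left.2 fun hne => ⟨hne, hclF _ h⟩

/-- The constraints `|π_p| ≤ |π_q|` that the dependencies force in finite instances. -/
inductive SizeLE (Su : Set (UID σ)) (Sf : Set (UFD σ)) : σ.Pos → σ.Pos → Prop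
  | uid {p q : σ.Pos} : reflUID Su p q → SizeLE Su Sf p q
  | fd {R : σ.Rel} {i j : Fin (σ.ar R)} : reflFD Sf R i j → SizeLE Su Sf ⟨R, j⟩ ⟨R, i⟩

lemma ncard_proj_le_of_sizeLE {J : Inst σ α} (hfin : J.Finite)
    (hU : ∀ p q, reflUID Su p q → proj J p ⊆ proj J q)
    (hF : ∀ R i j, reflFD Sf R i j → SatFD J R i j)
    (h : Relation.ReflTransGen (SizeLE Su Sf) p q) : (proj J p).ncard ≤ (proj J q).ncard := by
  induction h with
  | refl => exact le_rfl
  | tail _ h ih =>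
    refine ih.trans ?_
    cases h with
    | uid h => exact Set.ncard_le_ncard (hU _ _ h) (finite_proj hfin _)
    | fd h => exact (hF _ _ _ h).ncard_proj_le hfin

lemma reflUID_symm_of_sizeLE (hclU : ∀ τ : UID σ, finImpUIDu Su Sf τ → τ ∈ Su)
    (h : reflUID Su p q) (hqp : Relation.ReflTransGen (SizeLE Su Sf) q p) : reflUID Su q p := by
  refine reflUID_of_finite_models hclU fun J hfin hJ => ?_
  have hU := forall_satUID_iff.1 hJ.1
  have hcard := ncard_proj_le_of_sizeLE hfin hU (forall_satUFD_iff.1 hJ.2) hqp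
  exact (Set.eq_of_subset_of_ncard_le (hU p q h) hcard (finite_proj hfin q)).ge

lemma reflFD_symm_of_sizeLE (hclF : ∀ φ : UFD σ, finImpUFDu Su Sf φ → φ ∈ Sf)
    (h : reflFD Sf R i j) (hij : Relation.ReflTransGen (SizeLE Su Sf) ⟨R, i⟩ ⟨R, j⟩) :
    reflFD Sf R j i := by
  refine reflFD_of_finite_models hclF fun J hfin hJ => ?_
  have hF := forall_satUFD_iff.1 hJ.2
  exact (hF R i j h).symm_of_ncard_proj_le hfin
    (ncard_proj_le_of_sizeLE hfin (forall_satUID_iff.1 hJ.1) hF hij)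

/-- Finitely closed dependencies, ranked by reachability along the size comparisons they force. -/
noncomputable def RankedDeps.ofFinitelyClosed
    (hclU : ∀ τ : UID σ, finImpUIDu Su Sf τ → τ ∈ Su)
    (hclF : ∀ φ : UFD σ, finImpUFDu Su Sf φ → φ ∈ Sf) : RankedDeps σ where
  uid := reflUID Su
  fd := reflFD Sf
  rank := reachRank (SizeLE Su Sf)
  uid_refl _ := Or.inl rfl
  uid_trans p q r hpq hqr := reflUID_of_finite_models hclU fun _ _ hJ =>
    (forall_satUID_iff.1 hJ.1 p q hpq).trans (forall_satUID_iff.1 hJ.1 q r hqr)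
  fd_refl _ _ := Or.inl rfl
  fd_trans hij hjl := reflFD_of_finite_models hclF fun _ _ hJ t u ht hu htu =>
    forall_satUFD_iff.1 hJ.2 _ _ _ hjl t u ht hu (forall_satUFD_iff.1 hJ.2 _ _ _ hij t u ht hu htu)
  rank_le_of_uid h := reachRank_le (.uid h)
  uid_symm_of_rank_eq h he :=
    reflUID_symm_of_sizeLE hclU h (reflTransGen_of_reachRank_eq (.uid h) he)
  rank_le_of_fd h := reachRank_le (.fd h)
  fd_symm_of_rank_eq h he :=
    reflFD_symm_of_sizeLE hclF h (reflTransGen_of_reachRank_eq (.fd h) he)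

end FinitelyClosed

/-! ### Partial models -/

section Construction

variable {D : RankedDeps σ} {I₀ I : Inst σ ℕ} {h : ℕ → β} {T : Inst σ β} {ℓ : ℕ} {p q : σ.Pos}
  {R : σ.Rel} {i j : Fin (σ.ar R)}

/-- A finite superinstance of `I₀` that satisfies the functional dependencies and the inclusions
into positions of rank less than `ℓ`, and whose image under the labelling `h` is `T`. -/
structure IsPartialModel (D : RankedDeps σ) (I₀ : Inst σ ℕ) (h : ℕ → β) (T : Inst σ β) (ℓ : ℕ)
    (I : Inst σ ℕ) : Prop where
  finite : I.Finite
  base_subset : I₀ ⊆ I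
  image_eq : Fact.map h '' I = T
  satFD : ∀ R i j, D.fd R i j → SatFD I R i j
  proj_subset : ∀ p q, D.uid p q → D.rank q < ℓ → proj I p ⊆ proj I q

/-- The elements that the inclusions require to occur at position `p` of a superinstance of `I`. -/
def demand (D : RankedDeps σ) (I : Inst σ ℕ) (p : σ.Pos) : Set ℕ :=
  {x | ∃ r, D.uid r p ∧ x ∈ proj I r}

lemma demand_mono (hpq : D.uid p q) : demand D I p ⊆ demand D I q :=
  fun _ ⟨r, hr, hx⟩ => ⟨r, D.uid_trans r p q hr hpq, hx⟩

lemma proj_subset_demand (p : σ.Pos) : proj I p ⊆ demand D I p := fun _ hx => ⟨p, D.uid_refl p, hx⟩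

lemma finite_demand (hI : I.Finite) (p : σ.Pos) : (demand D I p).Finite :=
  (Set.finite_iUnion (finite_proj hI)).subset fun _ ⟨r, _, hx⟩ => Set.mem_iUnion.2 ⟨r, hx⟩

lemma RankedDeps.antisymmRel_of_fd_of_uid (hji : D.fd R j i) (hjp : D.uid ⟨R, j⟩ p)
    (hrank : D.rank p = D.rank ⟨R, i⟩) : AntisymmRel D.uid ⟨R, j⟩ p :=
  ⟨hjp, D.uid_symm_of_rank_eq hjp ((D.rank_le_of_uid hjp).antisymm
    (hrank.trans_le (D.rank_le_of_fd hji)))⟩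

lemma RankedDeps.rank_eq_of_antisymmRel (hpq : AntisymmRel D.uid p q) : D.rank p = D.rank q :=
  (D.rank_le_of_uid hpq.1).antisymm (D.rank_le_of_uid hpq.2)

lemma IsPartialModel.insert (hI : IsPartialModel D I₀ h T ℓ I) {t : Fin (σ.ar R) → ℕ}
    (hfd : ∀ i j, D.fd R i j → ∀ u, (⟨R, u⟩ : Fact σ ℕ) ∈ I → u i = t i → u j = t j)
    (hrank : ∀ j, D.rank ⟨R, j⟩ < ℓ → t j ∈ proj I ⟨R, j⟩) :
    IsPartialModel D I₀ h (insert ⟨R, h ∘ t⟩ T) ℓ (insert ⟨R, t⟩ I) where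
  finite := hI.finite.insert _
  base_subset := hI.base_subset.trans (Set.subset_insert _ _)
  image_eq := by rw [Set.image_insert_eq, hI.image_eq]; rfl
  satFD S i j hij := (hI.satFD S i j hij).insert fun e => by
    subst e
    exact hfd i j hij
  proj_subset p q hpq hq := by
    intro a ha
    suffices a ∈ proj I p from
      proj_mono (Set.subset_insert _ _) q (hI.proj_subset p q hpq hq this)
    rcases mem_proj_insert.1 ha with ha | ⟨j, rfl, rfl⟩
    · exact ha
    · exact hrank j ((D.rank_le_of_uid hpq).trans_lt hq)

lemma exists_fresh_tuple (hh : ∀ b, (h ⁻¹' {b}).Infinite) (hI : I.Finite) (u : Fin (σ.ar R) → β) :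
    ∃ t, h ∘ t = u ∧ ∀ j p, t j ∉ proj I p := by
  choose t htu ht using fun j =>
    (hh (u j)).exists_notMem_finite (Set.finite_iUnion (finite_proj hI))
  exact ⟨t, funext htu, fun j p hp => ht j (Set.mem_iUnion.2 ⟨p, hp⟩)⟩

lemma exists_isPartialModel_zero (hh : ∀ b, (h ⁻¹' {b}).Infinite) (hfin : I₀.Finite)
    (hfd : ∀ R i j, D.fd R i j → SatFD I₀ R i j) (hT : T.Finite)
    (hI₀ : Set.MapsTo (Fact.map h) I₀ T) : ∃ I, IsPartialModel D I₀ h T 0 I := by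
  suffices ∃ I, IsPartialModel D I₀ h (T ∪ Fact.map h '' I₀) 0 I by
    rwa [Set.union_eq_left.2 hI₀.image_subset] at this
  clear hI₀
  induction T, hT using Set.Finite.induction_on with
  | empty => exact ⟨I₀, hfin, subset_rfl, by rw [Set.empty_union], hfd, by simp⟩
  | @insert F T _ _ ih =>
    obtain ⟨I, hI⟩ := ih
    obtain ⟨R, u⟩ := F
    obtain ⟨t, rfl, ht⟩ := exists_fresh_tuple hh hI.finite u
    rw [Set.insert_union]
    exact ⟨_, hI.insert (fun i _ _ v hv hvt => absurd (hvt ▸ mem_proj_of_mem hv i) (ht i _))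
      (by simp)⟩

/-- The new fact takes the elements `y j` at the positions determining `R^i`, and is completed by
the elements of an old fact with the same labels. -/
lemma IsPartialModel.exists_extension (hI : IsPartialModel D I₀ h T (D.rank ⟨R, i⟩) I)
    {u : Fin (σ.ar R) → β} (hu : (⟨R, u⟩ : Fact σ β) ∈ T) {y : Fin (σ.ar R) → ℕ}
    (hy : ∀ j, D.fd R j i → y j ∉ proj I ⟨R, j⟩ ∧ h (y j) = u j) :
    ∃ I', IsPartialModel D I₀ h T (D.rank ⟨R, i⟩) I' ∧ I ⊆ I' ∧ y i ∈ proj I' ⟨R, i⟩ ∧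
      ∀ p, ∀ a ∈ demand D I' p,
        a ∈ demand D I p ∨ ∃ j, D.fd R j i ∧ D.uid ⟨R, j⟩ p ∧ a = y j := by
  classical
  obtain ⟨g, hg, rfl⟩ := mk_mem_image_map.1 (hI.image_eq.symm ▸ hu)
  let t : Fin (σ.ar R) → ℕ := fun j => if D.fd R j i then y j else g j
  have ht_fd {j} (hj : D.fd R j i) : t j = y j := if_pos hj
  have ht_not {j} (hj : ¬ D.fd R j i) : t j = g j := if_neg hj
  have hlabel : h ∘ t = h ∘ g := by
    funext j
    by_cases hj : D.fd R j i
    · exact (congrArg h (ht_fd hj)).trans (hy j hj).2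
    · exact congrArg h (ht_not hj)
  refine ⟨_, ?_, Set.subset_insert ⟨R, t⟩ I,
    ht_fd (D.fd_refl R i) ▸ mem_proj_of_mem (Set.mem_insert _ _) i, ?_⟩
  · rw [← Set.insert_eq_of_mem hu, ← hlabel]
    refine hI.insert (fun a b hab v hv hvt => ?_) fun j hj => ?_
    · have ha : ¬ D.fd R a i := fun ha =>
        (hy a ha).1 (ht_fd ha ▸ hvt ▸ mem_proj_of_mem hv a)
      rw [ht_not fun hb => ha (D.fd_trans hab hb)]
      exact hI.satFD R a b hab v g hv hg (hvt.trans (ht_not ha))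
    · rw [ht_not fun hji => (D.rank_le_of_fd hji).not_gt hj]
      exact mem_proj_of_mem hg j
  · rintro p a ⟨r, hrp, ha⟩
    rcases mem_proj_insert.1 ha with ha | ⟨j, rfl, rfl⟩
    · exact Or.inl ⟨r, hrp, ha⟩
    · by_cases hj : D.fd R j i
      · exact Or.inr ⟨j, hj, hrp, ht_fd hj⟩
      · exact Or.inl ⟨_, hrp, ht_not hj ▸ mem_proj_of_mem hg j⟩

lemma exists_eq_empty_of_ssubset {ι γ : Type*} {P : ι → Prop} {f : ι → Set γ}
    (hfin : ∀ a, P a → (f a).Finite)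
    (hstep : ∀ a, P a → (f a).Nonempty → ∃ b, P b ∧ f b ⊂ f a) (hP : ∃ a, P a) :
    ∃ a, P a ∧ f a = ∅ := by
  obtain ⟨a, ha, hmin⟩ := exists_minimalFor_of_wellFoundedLT P (fun a => (f a).ncard) hP
  refine ⟨a, ha, Set.not_nonempty_iff_eq_empty.1 fun hne => ?_⟩
  obtain ⟨b, hb, hba⟩ := hstep a ha hne
  have hlt := Set.ncard_lt_ncard hba (hfin a ha)
  exact hlt.not_ge (hmin hb hlt.le)

end Construction

/-! ### Making the deficits generic -/

section Levels

variable {D : RankedDeps σ} {I₀ I I' : Inst σ ℕ} {k n ℓ N : ℕ} {h : ℕ → BisimType σ k}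
  {E : σ.Pos → Set ℕ} {p q : σ.Pos} {R : σ.Rel} {i j : Fin (σ.ar R)} {x : ℕ} {z : CEl σ}

/-- The quotient of the chase by `k`-round types: the target of the labellings of partial models. -/
abbrev chaseQuotient (D : RankedDeps σ) (I₀ : Inst σ ℕ) (k : ℕ) : Inst σ (BisimType σ k) :=
  typeQuotient (obliviousChase D.uid I₀) k

/-- The `k`-round types of the chase elements that are `n`-generic at `p`. -/
def genericTypes (D : RankedDeps σ) (I₀ : Inst σ ℕ) (k n : ℕ) (p : σ.Pos) : Set (BisimType σ k) :=
  bisimType (obliviousChase D.uid I₀) k '' {z | IsGeneric D.uid I₀ n z p}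

lemma genericTypes_succ_subset : genericTypes D I₀ k (n + 1) p ⊆ genericTypes D I₀ k n p :=
  Set.image_mono fun _ => IsGeneric.pred

lemma genericTypes_congr (hpq : AntisymmRel D.uid p q) :
    genericTypes D I₀ k n p = genericTypes D I₀ k n q :=
  (Set.image_mono fun _ hz => hz.congr_pos hpq).antisymm
    (Set.image_mono fun _ hz => hz.congr_pos hpq.symm)

lemma demand_congr (hpq : AntisymmRel D.uid p q) : demand D I p = demand D I q :=
  (demand_mono hpq.1).antisymm (demand_mono hpq.2)

/-- The violations `(x, p)` of inclusions into positions of rank `ℓ` for which the label of `x` is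
not the type of an `n`-generic element. -/
def nongenericDeficits (D : RankedDeps σ) (I₀ : Inst σ ℕ) (h : ℕ → BisimType σ k) (ℓ n : ℕ)
    (I : Inst σ ℕ) : Set (ℕ × σ.Pos) :=
  {w | D.rank w.2 = ℓ ∧ w.1 ∈ demand D I w.2 ∧ w.1 ∉ proj I w.2 ∧
    h w.1 ∉ genericTypes D I₀ k n w.2}

lemma finite_nongenericDeficits (hI : I.Finite) : (nongenericDeficits D I₀ h ℓ n I).Finite :=
  ((Set.finite_iUnion (finite_demand hI)).prod Set.finite_univ).subset
    fun w hw => ⟨Set.mem_iUnion.2 ⟨w.2, hw.2.1⟩, trivial⟩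

lemma nongenericDeficits_subset (hsub : I ⊆ I')
    (hdemand : ∀ p, D.rank p = ℓ → ∀ a ∈ demand D I' p,
      a ∈ demand D I p ∨ h a ∈ genericTypes D I₀ k n p) :
    nongenericDeficits D I₀ h ℓ n I' ⊆ nongenericDeficits D I₀ h ℓ n I :=
  fun w ⟨hrank, hw, hproj, hgen⟩ =>
    ⟨hrank, (hdemand w.2 hrank w.1 hw).resolve_right hgen, fun hx => hproj (proj_mono hsub _ hx),
      hgen⟩

lemma IsPartialModel.nongenericDeficits_zero
    (hI : IsPartialModel D I₀ h (chaseQuotient D I₀ k) ℓ I) :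
    nongenericDeficits D I₀ h ℓ 0 I = ∅ := by
  refine Set.eq_empty_of_forall_notMem ?_
  rintro ⟨_, p⟩ ⟨-, ⟨r, hrp, t, ht, rfl⟩, -, hgen⟩
  have hquot : Fact.map h ⟨r.1, t⟩ ∈ chaseQuotient D I₀ k := hI.image_eq ▸ ⟨_, ht, rfl⟩
  obtain ⟨u, hu, hut⟩ := mk_mem_image_map.1 hquot
  exact hgen ⟨u r.2, (wants_of_mem hu r.2).trans hrp, congrFun hut r.2⟩

lemma IsPartialModel.exists_repair (hh : ∀ b, (h ⁻¹' {b}).Infinite)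
    (hI : IsPartialModel D I₀ h (chaseQuotient D I₀ k) (D.rank ⟨R, i⟩) I)
    (hx : x ∈ demand D I ⟨R, i⟩) (hxI : x ∉ proj I ⟨R, i⟩)
    (hgen : h x ∈ genericTypes D I₀ k n ⟨R, i⟩) :
    ∃ I', IsPartialModel D I₀ h (chaseQuotient D I₀ k) (D.rank ⟨R, i⟩) I' ∧ I ⊆ I' ∧
      x ∈ proj I' ⟨R, i⟩ ∧ ∀ p, D.rank p = D.rank ⟨R, i⟩ → ∀ a ∈ demand D I' p,
        a ∈ demand D I p ∨ h a ∈ genericTypes D I₀ k (n + 1) p := by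
  classical
  obtain ⟨z, hz, hzx⟩ := hgen
  obtain ⟨t, ht, htI⟩ := exists_fresh_tuple hh hI.finite
    (bisimType (obliviousChase D.uid I₀) k ∘ chaseTuple z ⟨R, i⟩)
  have hu : (⟨R, h ∘ t⟩ : Fact σ _) ∈ chaseQuotient D I₀ k :=
    mk_mem_image_map.2 ⟨_, chaseTuple_mem (p := ⟨R, i⟩) hz.wants, ht.symm⟩
  obtain ⟨I', hI', hsub, hxI', hdemand⟩ := hI.exists_extension hu (y := Function.update t i x) (by
    intro j _
    obtain rfl | hj := eq_or_ne j i
    · rw [Function.update_self]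
      exact ⟨hxI, hzx.symm.trans
        ((congrArg _ (chaseTuple_self z ⟨R, j⟩).symm).trans (congrFun ht j).symm)⟩
    · rw [Function.update_of_ne hj]
      exact ⟨htI j _, rfl⟩)
  rw [Function.update_self] at hxI'
  refine ⟨I', hI', hsub, hxI', fun p hp a ha => ?_⟩
  rcases hdemand p a ha with ha | ⟨j, hji, hjp, rfl⟩
  · exact Or.inl ha
  obtain rfl | hj := eq_or_ne j i
  · rw [Function.update_self]
    exact Or.inl (demand_mono hjp hx)
  · rw [Function.update_of_ne hj]
    exact Or.inr ⟨_, (hz.chaseTuple (p := ⟨R, i⟩) hj).congr_pos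
      (D.antisymmRel_of_fd_of_uid hji hjp hp), (congrFun ht j).symm⟩

lemma IsPartialModel.exists_nongenericDeficits_ssubset (hh : ∀ b, (h ⁻¹' {b}).Infinite)
    (hI : IsPartialModel D I₀ h (chaseQuotient D I₀ k) ℓ I)
    (hn : nongenericDeficits D I₀ h ℓ n I = ∅)
    (hne : (nongenericDeficits D I₀ h ℓ (n + 1) I).Nonempty) :
    ∃ I', (IsPartialModel D I₀ h (chaseQuotient D I₀ k) ℓ I' ∧
        nongenericDeficits D I₀ h ℓ n I' = ∅) ∧
      nongenericDeficits D I₀ h ℓ (n + 1) I' ⊂ nongenericDeficits D I₀ h ℓ (n + 1) I := by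
  obtain ⟨⟨x, R, i⟩, rfl, hx, hxI, hnot⟩ := hne
  have hgen : h x ∈ genericTypes D I₀ k n ⟨R, i⟩ :=
    not_not.1 fun hgen => Set.eq_empty_iff_forall_notMem.1 hn (x, ⟨R, i⟩) ⟨rfl, hx, hxI, hgen⟩
  obtain ⟨I', hI', hsub, hxI', hdemand⟩ := hI.exists_repair hh hx hxI hgen
  refine ⟨I', ⟨hI', Set.subset_eq_empty (nongenericDeficits_subset hsub fun p hp a ha => ?_) hn⟩,
    Set.ssubset_iff_exists.2 ⟨nongenericDeficits_subset hsub hdemand, (x, ⟨R, i⟩),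
      ⟨rfl, hx, hxI, hnot⟩, fun hw' => hw'.2.2.1 hxI'⟩⟩
  exact (hdemand p hp a ha).imp_right fun ha => genericTypes_succ_subset ha

lemma exists_nongenericDeficits_eq_empty (hh : ∀ b, (h ⁻¹' {b}).Infinite)
    (hI : ∃ I, IsPartialModel D I₀ h (chaseQuotient D I₀ k) ℓ I) (n : ℕ) :
    ∃ I, IsPartialModel D I₀ h (chaseQuotient D I₀ k) ℓ I ∧
      nongenericDeficits D I₀ h ℓ n I = ∅ := by
  induction n with
  | zero => exact hI.imp fun I hI => ⟨hI, hI.nongenericDeficits_zero⟩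
  | succ n ih =>
    obtain ⟨I, ⟨hI, -⟩, hempty⟩ := exists_eq_empty_of_ssubset
      (f := nongenericDeficits D I₀ h ℓ (n + 1))
      (fun _ hI => finite_nongenericDeficits hI.1.finite)
      (fun _ hI => hI.1.exists_nongenericDeficits_ssubset hh hI.2) ih
    exact ⟨I, hI, hempty⟩

/-! ### Filling balanced demands -/

/-- Prescribed sets of elements for all positions, of the same size `N` at all positions admitting
generic elements and equal at equivalent positions. -/
structure IsBalanced (D : RankedDeps σ) (I₀ : Inst σ ℕ) (k N : ℕ) (E : σ.Pos → Set ℕ) : Prop where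
  finite : ∀ p, (E p).Finite
  ncard_eq : ∀ {p z}, IsGeneric D.uid I₀ (k + 1) z p → (E p).ncard = N
  congr : ∀ {p q}, AntisymmRel D.uid p q → E p = E q

/-- A partial model whose projections at rank `ℓ` are to be completed to the sets `E`: these contain
all elements required at rank `ℓ`, and the missing elements have labels of generic elements. -/
structure IsFilling (D : RankedDeps σ) (I₀ : Inst σ ℕ) (h : ℕ → BisimType σ k) (ℓ : ℕ)
    (E : σ.Pos → Set ℕ) (I : Inst σ ℕ) : Prop
    extends IsPartialModel D I₀ h (chaseQuotient D I₀ k) ℓ I where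
  demand_subset : ∀ p, D.rank p = ℓ → demand D I p ⊆ E p
  generic : ∀ p, D.rank p = ℓ → ∀ x ∈ E p, x ∉ proj I p → h x ∈ genericTypes D I₀ k (k + 1) p

lemma exists_padding {ι : Type*} [Finite ι] {h : ℕ → β} (hh : ∀ b, (h ⁻¹' {b}).Infinite)
    (S : ι → Set ℕ) (hS : ∀ a, (S a).Finite) (G : ι → Set β) :
    ∃ (N : ℕ) (E : ι → Set ℕ), (∀ a b, S a = S b → G a = G b → E a = E b) ∧
      ∀ a, S a ⊆ E a ∧ (E a).Finite ∧ E a ⊆ S a ∪ h ⁻¹' G a ∧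
        ((G a).Nonempty → (E a).ncard = N) := by
  obtain ⟨N, hN⟩ := (Set.finite_range fun a => (S a).ncard).bddAbove
  have hpad (A : Set ℕ) (B : Set β) : ∃ E, A.Finite → A.ncard ≤ N →
      A ⊆ E ∧ E.Finite ∧ E ⊆ A ∪ h ⁻¹' B ∧ (B.Nonempty → E.ncard = N + 1) := by
    rcases B.eq_empty_or_nonempty with rfl | ⟨b, hb⟩
    · exact ⟨A, fun hA _ => ⟨subset_rfl, hA, Set.subset_union_left, by simp⟩⟩
    by_cases hA : A.Finite ∧ A.ncard ≤ N
    · have hinf : (A ∪ h ⁻¹' B).Infinite :=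
        (hh b).mono ((Set.preimage_mono (Set.singleton_subset_iff.2 hb)).trans
          Set.subset_union_right)
      obtain ⟨E, hAE, hEB, hcard⟩ :=
        hinf.exists_superset_ncard_eq Set.subset_union_left hA.1 (Nat.le_succ_of_le hA.2)
      exact ⟨E, fun _ _ => ⟨hAE, Set.finite_of_ncard_pos (hcard ▸ N.succ_pos), hEB, fun _ => hcard⟩⟩
    · exact ⟨∅, fun h₁ h₂ => absurd ⟨h₁, h₂⟩ hA⟩
  choose pad hpad using hpad
  exact ⟨N + 1, fun a => pad (S a) (G a), fun a b hSab hGab => congrArg₂ pad hSab hGab,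
    fun a => hpad _ _ (hS a) (hN ⟨a, rfl⟩)⟩

lemma IsPartialModel.exists_isFilling (hh : ∀ b, (h ⁻¹' {b}).Infinite)
    (hI : IsPartialModel D I₀ h (chaseQuotient D I₀ k) ℓ I)
    (hgen : nongenericDeficits D I₀ h ℓ (k + 1) I = ∅) :
    ∃ N E, IsBalanced D I₀ k N E ∧ IsFilling D I₀ h ℓ E I := by
  obtain ⟨N, E, hcongr, hE⟩ :=
    exists_padding hh (demand D I) (finite_demand hI.finite) (genericTypes D I₀ k (k + 1))
  choose hsub hfin hnew hcard using hE
  refine ⟨N, E, ⟨hfin, fun hz => hcard _ ⟨_, _, hz, rfl⟩,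
    fun hpq => hcongr _ _ (demand_congr hpq) (genericTypes_congr hpq)⟩, hI, fun p _ => hsub p, ?_⟩
  intro p hp x hx hxI
  refine (hnew p hx).elim (fun hxd => not_not.1 fun hxg => ?_) id
  exact Set.eq_empty_iff_forall_notMem.1 hgen (x, p) ⟨hp, hxd, hxI, hxg⟩

lemma IsFilling.exists_missing (hE : IsBalanced D I₀ k N E)
    (hI : IsFilling D I₀ h (D.rank ⟨R, i⟩) E I) (hx : x ∈ E ⟨R, i⟩) (hxI : x ∉ proj I ⟨R, i⟩)
    (hcard : (E ⟨R, i⟩).ncard = (E ⟨R, j⟩).ncard) (hji : D.fd R j i)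
    (hrank : D.rank ⟨R, j⟩ = D.rank ⟨R, i⟩) : ∃ y ∈ E ⟨R, j⟩, y ∉ proj I ⟨R, j⟩ := by
  refine Set.exists_mem_notMem_of_ncard_lt_ncard ?_ (finite_proj hI.finite _)
  calc (proj I ⟨R, j⟩).ncard
      ≤ (proj I ⟨R, i⟩).ncard :=
        (hI.satFD R i j (D.fd_symm_of_rank_eq hji hrank.symm)).ncard_proj_le hI.finite
    _ < (E ⟨R, i⟩).ncard := Set.ncard_lt_ncard (Set.ssubset_iff_exists.2
        ⟨(proj_subset_demand _).trans (hI.demand_subset _ rfl), x, hx, hxI⟩) (hE.finite _)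
    _ = (E ⟨R, j⟩).ncard := hcard

lemma IsFilling.exists_new_element (hh : ∀ b, (h ⁻¹' {b}).Infinite) (hE : IsBalanced D I₀ k N E)
    (hI : IsFilling D I₀ h (D.rank ⟨R, i⟩) E I) (hx : x ∈ E ⟨R, i⟩) (hxI : x ∉ proj I ⟨R, i⟩)
    (hz : IsGeneric D.uid I₀ (k + 1) z ⟨R, i⟩) (hj : j ≠ i) (hji : D.fd R j i) :
    ∃ y, y ∉ proj I ⟨R, j⟩ ∧
      h y = bisimType (obliviousChase D.uid I₀) k (chaseTuple z ⟨R, i⟩ j) ∧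
      (D.rank ⟨R, j⟩ = D.rank ⟨R, i⟩ → y ∈ E ⟨R, j⟩) := by
  by_cases hrank : D.rank ⟨R, j⟩ = D.rank ⟨R, i⟩
  · have hzj := (hz.chaseTuple (p := ⟨R, i⟩) hj).pred
    have hcard : (E ⟨R, i⟩).ncard = (E ⟨R, j⟩).ncard :=
      (hE.ncard_eq hz).trans (hE.ncard_eq hzj).symm
    obtain ⟨y, hy, hyI⟩ := hI.exists_missing hE hx hxI hcard hji hrank
    obtain ⟨z', hz', hyz'⟩ := hI.generic _ hrank y hy hyI
    exact ⟨y, hyI, hyz'.symm.trans (hz'.bisimType_eq hzj), fun _ => hy⟩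
  · obtain ⟨y, hy, hyI⟩ := (hh _).exists_notMem_finite (finite_proj hI.finite ⟨R, j⟩)
    exact ⟨y, hyI, hy, fun hrank' => absurd hrank' hrank⟩

lemma IsFilling.exists_new_tuple (hh : ∀ b, (h ⁻¹' {b}).Infinite) (hE : IsBalanced D I₀ k N E)
    (hI : IsFilling D I₀ h (D.rank ⟨R, i⟩) E I) (hx : x ∈ E ⟨R, i⟩) (hxI : x ∉ proj I ⟨R, i⟩) :
    ∃ u, (⟨R, u⟩ : Fact σ _) ∈ chaseQuotient D I₀ k ∧ ∃ y : Fin (σ.ar R) → ℕ, y i = x ∧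
      ∀ j, D.fd R j i → y j ∉ proj I ⟨R, j⟩ ∧ h (y j) = u j ∧
        (D.rank ⟨R, j⟩ = D.rank ⟨R, i⟩ → y j ∈ E ⟨R, j⟩) := by
  obtain ⟨z, hz, hzx⟩ := hI.generic _ rfl x hx hxI
  refine ⟨_, mk_mem_image_map.2 ⟨_, chaseTuple_mem (p := ⟨R, i⟩) hz.wants, rfl⟩, ?_⟩
  have key (j : Fin (σ.ar R)) : ∃ y, (j = i → y = x) ∧ (D.fd R j i → y ∉ proj I ⟨R, j⟩ ∧
      h y = bisimType (obliviousChase D.uid I₀) k (chaseTuple z ⟨R, i⟩ j) ∧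
      (D.rank ⟨R, j⟩ = D.rank ⟨R, i⟩ → y ∈ E ⟨R, j⟩)) := by
    obtain rfl | hj := eq_or_ne j i
    · exact ⟨x, fun _ => rfl, fun _ =>
        ⟨hxI, (congrArg _ (chaseTuple_self z ⟨R, j⟩)).trans hzx |>.symm, fun _ => hx⟩⟩
    by_cases hji : D.fd R j i
    · obtain ⟨y, hy⟩ := hI.exists_new_element hh hE hx hxI hz hj hji
      exact ⟨y, fun hji => absurd hji hj, fun _ => hy⟩
    · exact ⟨x, fun _ => rfl, fun hji' => absurd hji' hji⟩
  choose y hyx hy using key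
  exact ⟨y, hyx i rfl, hy⟩

/-- The elements `(x, p)` of the prescribed sets at rank `ℓ` that do not yet occur in `I`. -/
def missing (D : RankedDeps σ) (ℓ : ℕ) (E : σ.Pos → Set ℕ) (I : Inst σ ℕ) : Set (ℕ × σ.Pos) :=
  {w | D.rank w.2 = ℓ ∧ w.1 ∈ E w.2 ∧ w.1 ∉ proj I w.2}

lemma IsFilling.exists_missing_ssubset (hh : ∀ b, (h ⁻¹' {b}).Infinite)
    (hE : IsBalanced D I₀ k N E) (hI : IsFilling D I₀ h ℓ E I) (hne : (missing D ℓ E I).Nonempty) :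
    ∃ I', IsFilling D I₀ h ℓ E I' ∧ missing D ℓ E I' ⊂ missing D ℓ E I := by
  obtain ⟨⟨x, R, i⟩, rfl, hx, hxI⟩ := hne
  obtain ⟨u, hu, y, rfl, hy⟩ := hI.exists_new_tuple hh hE hx hxI
  obtain ⟨I', hI', hsub, hxI', hdemand⟩ :=
    hI.exists_extension hu fun j hj => ⟨(hy j hj).1, (hy j hj).2.1⟩
  have hmono (p) : proj I p ⊆ proj I' p := proj_mono hsub p
  refine ⟨I', ⟨hI', ?_, fun p hp x hx hxI' => hI.generic p hp x hx fun hxI => hxI' (hmono p hxI)⟩,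
    Set.ssubset_iff_exists.2 ⟨fun w hw => ⟨hw.1, hw.2.1, fun hwI => hw.2.2 (hmono w.2 hwI)⟩,
      (y i, ⟨R, i⟩), ⟨rfl, hx, hxI⟩, fun hw' => hw'.2.2 hxI'⟩⟩
  intro p hp a ha
  rcases hdemand p a ha with ha | ⟨j, hji, hjp, rfl⟩
  · exact hI.demand_subset p hp ha
  · have hjp := D.antisymmRel_of_fd_of_uid hji hjp hp
    exact hE.congr hjp ▸ (hy j hji).2.2 ((D.rank_eq_of_antisymmRel hjp).trans hp)

lemma exists_isPartialModel_succ (hh : ∀ b, (h ⁻¹' {b}).Infinite)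
    (hI : ∃ I, IsPartialModel D I₀ h (chaseQuotient D I₀ k) ℓ I) :
    ∃ I, IsPartialModel D I₀ h (chaseQuotient D I₀ k) (ℓ + 1) I := by
  obtain ⟨I, hI, hgen⟩ := exists_nongenericDeficits_eq_empty hh hI (k + 1)
  obtain ⟨N, E, hE, hIE⟩ := hI.exists_isFilling hh hgen
  have hfin (I) : (missing D ℓ E I).Finite :=
    ((Set.finite_iUnion hE.finite).prod Set.finite_univ).subset
      fun w hw => ⟨Set.mem_iUnion.2 ⟨w.2, hw.2.1⟩, trivial⟩
  obtain ⟨J, hJ, hempty⟩ := exists_eq_empty_of_ssubset (fun I _ => hfin I)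
    (fun _ hI => hI.exists_missing_ssubset hh hE) ⟨I, hIE⟩
  refine ⟨J, { hJ.toIsPartialModel with proj_subset := fun p q hpq hq x hx => ?_ }⟩
  rcases Nat.lt_succ_iff_lt_or_eq.1 hq with hq | hq
  · exact hJ.proj_subset p q hpq hq hx
  · exact not_not.1 fun hxq => Set.eq_empty_iff_forall_notMem.1 hempty (x, q)
      ⟨hq, hJ.demand_subset q hq ⟨p, hpq, hx⟩, hxq⟩

/-! ### Universal models -/

instance (σ : Sig) : (n : ℕ) → Nonempty (BisimType σ n)
  | 0 => inferInstanceAs (Nonempty Unit)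
  | _ + 1 => ⟨(∅ : Set _)⟩

lemma exists_infinite_fibers_eqOn [Nonempty β] [Countable β] {S : Set ℕ} (hS : S.Finite)
    (f : ℕ → β) : ∃ h : ℕ → β, Set.EqOn h f S ∧ ∀ b, (h ⁻¹' {b}).Infinite := by
  classical
  obtain ⟨s, hs⟩ := exists_surjective_nat β
  refine ⟨S.piecewise f fun a => s a.unpair.1, S.piecewise_eqOn _ _, fun b => ?_⟩
  obtain ⟨a, rfl⟩ := hs b
  have hinj : Function.Injective (Nat.pair a) := fun m m' hm => (Nat.pair_eq_pair.1 hm).2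
  refine ((Set.infinite_range_of_injective hinj).sdiff hS).mono ?_
  rintro _ ⟨⟨m, rfl⟩, hm⟩
  simp [Set.piecewise_eq_of_notMem _ _ _ hm]

lemma exists_labelling (hfin : I₀.Finite) (k : ℕ) :
    ∃ h : ℕ → BisimType σ k, (∀ b, (h ⁻¹' {b}).Infinite) ∧
      Set.MapsTo (Fact.map h) I₀ (chaseQuotient D I₀ k) := by
  obtain ⟨h, heq, hh⟩ := exists_infinite_fibers_eqOn (Set.finite_iUnion (finite_proj hfin))
    fun a => bisimType (obliviousChase D.uid I₀) k (.base a)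
  refine ⟨h, hh, ?_⟩
  rintro ⟨R, t⟩ ht
  refine ⟨Fact.map .base ⟨R, t⟩, Or.inl ⟨_, ht, rfl⟩, ?_⟩
  rw [Fact.map, Fact.map, Fact.map]
  congr 1
  funext i
  exact (heq (Set.mem_iUnion.2 ⟨⟨R, i⟩, mem_proj_of_mem ht i⟩)).symm

theorem RankedDeps.exists_finite_model (D : RankedDeps σ) (hfin : I₀.Finite)
    (hfd : ∀ R i j, D.fd R i j → SatFD I₀ R i j) (k : ℕ) :
    ∃ I : Inst σ ℕ, I₀ ⊆ I ∧ I.Finite ∧ (∀ p q, D.uid p q → proj I p ⊆ proj I q) ∧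
      (∀ R i j, D.fd R i j → SatFD I R i j) ∧
      ∃ h : ℕ → BisimType σ k, Set.MapsTo (Fact.map h) I (chaseQuotient D I₀ k) := by
  obtain ⟨h, hh, hI₀⟩ := exists_labelling (D := D) hfin k
  have hlevel (ℓ : ℕ) : ∃ I, IsPartialModel D I₀ h (chaseQuotient D I₀ k) ℓ I := by
    induction ℓ with
    | zero => exact exists_isPartialModel_zero hh hfin hfd (Set.toFinite _) hI₀
    | succ ℓ ih => exact exists_isPartialModel_succ hh ih
  obtain ⟨B, hB⟩ := (Set.finite_range D.rank).bddAbove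
  obtain ⟨I, hI⟩ := hlevel (B + 1)
  exact ⟨I, hI.base_subset, hI.finite,
    fun p q hpq => hI.proj_subset p q hpq (Nat.lt_succ_of_le (hB ⟨q, rfl⟩)), hI.satFD, h,
    Set.mapsTo_iff_image_subset.2 hI.image_eq.le⟩

end Levels

theorem k_universal_models_finitely_closed_general
    {σ : Sig} (Su : Set (UID σ)) (Sf : Set (UFD σ))
    (hclU : ∀ τ : UID σ, finImpUIDu Su Sf τ → τ ∈ Su)
    (hclF : ∀ φ : UFD σ, finImpUFDu Su Sf φ → φ ∈ Sf)
    (k : ℕ) (I₀ : Inst σ ℕ) (hfin : I₀.Finite)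
    (hsat : ∀ φ ∈ Sf, satUFD I₀ φ) :
    ∃ I : Inst σ ℕ, I₀ ⊆ I ∧ I.Finite ∧ satAllU I Su Sf ∧
      ∀ q : CQ σ, IsACQ q → q.size ≤ k → satCQ I q → unrEntailsU I₀ Su Sf q := by
  obtain ⟨I, hsub, hI, huid, hfd, h, hh⟩ :=
    (RankedDeps.ofFinitelyClosed hclU hclF).exists_finite_model hfin (forall_satUFD_iff.1 hsat) k
  refine ⟨I, hsub, hI, ⟨forall_satUID_iff.2 huid, forall_satUFD_iff.2 hfd⟩, ?_⟩
  intro q hq hk hIq J hJ hJsat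
  exact satCQ_of_mapsTo_typeQuotient hh hJ (forall_satUID_iff.1 hJsat.1) hq hk hIq

/-- **k-universal models for finitely closed UIDs and UFDs.** If `Su ∪ Sf` (UIDs and
UFDs) is a finite set closed under finite implication (and the signature has no
useless relations: every relation occurs in the UID chase of `I₀` by `Su`), then
every finite instance `I₀` satisfying `Sf` has a finite superinstance satisfying the
constraints which is `k`-sound for them, `I₀`, and the class of acyclic Boolean CQs. -/
theorem k_universal_models_finitely_closed
    {σ : Sig} (Su : Set (UID σ)) (Sf : Set (UFD σ))
    (hSu : Su.Finite) (hSf : Sf.Finite)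
    (hclU : ∀ τ : UID σ, finImpUIDu Su Sf τ → τ ∈ Su)
    (hclF : ∀ φ : UFD σ, finImpUFDu Su Sf φ → φ ∈ Sf)
    (k : ℕ) (I₀ : Inst σ ℕ) (hfin : I₀.Finite)
    (hsat : ∀ φ ∈ Sf, satUFD I₀ φ)
    (huseful : ∀ R : σ.Rel, ∃ t : Fin (σ.ar R) → CEl σ,
        (⟨R, t⟩ : Fact σ (CEl σ)) ∈ chaseInst I₀ Su) :
    ∃ I : Inst σ ℕ, I₀ ⊆ I ∧ I.Finite ∧ satAllU I Su Sf ∧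
      ∀ q : CQ σ, IsACQ q → q.size ≤ k → satCQ I q → unrEntailsU I₀ Su Sf q := by
  exact k_universal_models_finitely_closed_general Su Sf hclU hclF k I₀ hfin hsat

end FQA
end

section
/- (Manageable partitions exist) Let Σ = Σ_UID ∪ Σ_UFD be a set of UIDs and UFDs closed under finite implication. Then Σ_UID has a manageable partition with respect to Σ_UFD: an ordered partition of Σ_UID each of whose classes is either reversible or trivial. -/
namespace FQA

variable {σ : Sig} {α β : Type}

/-- A set of UIDs is transitively closed. -/
def TransClosedUID (Su : Set (UID σ)) : Prop :=
  ∀ τ ∈ Su, ∀ τ' ∈ Su, τ.dst = τ'.src →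
    ∀ h : τ.src ≠ τ'.dst, (⟨τ.src, τ'.dst, h⟩ : UID σ) ∈ Su

/-- A set of UFDs is closed under UFD transitivity. -/
def TransClosedUFD (Sf : Set (UFD σ)) : Prop :=
  ∀ (R : σ.Rel) (i j k : Fin (σ.ar R)) (h1 : i ≠ j) (h2 : j ≠ k) (h3 : i ≠ k),
    (⟨R, i, j, h1⟩ : UFD σ) ∈ Sf → (⟨R, j, k, h2⟩ : UFD σ) ∈ Sf →
    (⟨R, i, k, h3⟩ : UFD σ) ∈ Sf

/-- A position occurs in some UID of `Su`. -/
def occursInUIDs (Su : Set (UID σ)) (p : σ.Pos) : Prop :=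
  ∃ τ ∈ Su, τ.src = p ∨ τ.dst = p

/-- The UIDs `Su` and UFDs `Sf` are reversible: both are closed under implication
(transitivity), every UID of `Su` has its reverse in `Su`, and every UFD of `Sf`
whose two positions occur in UIDs of `Su` has its reverse in `Sf`. -/
def Reversible (Su : Set (UID σ)) (Sf : Set (UFD σ)) : Prop :=
  TransClosedUID Su ∧ TransClosedUFD Sf ∧
  (∀ τ ∈ Su, τ.rev ∈ Su) ∧
  (∀ φ ∈ Sf, occursInUIDs Su φ.posSrc → occursInUIDs Su φ.posDst → φ.rev ∈ Sf)

/-- `τ ↣ τ'`: writing `τ : R^p ⊆ S^q` and `τ' : S^r ⊆ T^v` with `S^q ≠ S^r`, the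
UFD `S^r → S^q` is in `Sf`. -/
def leads (Sf : Set (UFD σ)) (τ τ' : UID σ) : Prop :=
  ∃ φ ∈ Sf, UFD.posSrc φ = τ'.src ∧ UFD.posDst φ = τ.dst

/-!
In a finite instance satisfying the dependencies, a UID `p ⊆ q` forces at most as many values at
`p` as at `q`, and a UFD `q → p` makes the values at `p` the image of those at `q`, with the same
effect. Let `p ≼ q` mean that this inequality between numbers of values holds in all such instances.
When moreover `q ≼ p`, the inclusion is an equality and the image map is injective, so the reversed
dependency is finitely implied, hence present.

Order `Su` by placing `τ` before `τ'` when `τ = τ'` or `τ.dst ≼ τ'.src`; this contains `↣`. Either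
`τ.dst ≼ τ.src` fails and the class of `τ` is `{τ}` with `τ ↣ τ` false, or all positions occurring
in the class of `τ` are `≼`-equivalent and the class is reversible. Any linear extension of the
order on the classes gives the partition.
-/

section OrderedClasses

variable {X : Type*}

theorem exists_list_fibers {K : Type*} [LinearOrder K] (k : X → K) {S : Set X} (hS : S.Finite) :
    ∃ L : List (Set X),
      (∀ P ∈ L, ∃ x ∈ S, P = {y ∈ S | k y = k x}) ∧
      (∀ x ∈ S, ∃ i, x ∈ L.get i) ∧
      (∀ i j, ∀ x ∈ L.get i, ∀ y ∈ L.get j, k x ≤ k y → i ≤ j) := by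
  let keys := (hS.image k).toFinset.sort
  have mem_keys {c : K} : c ∈ keys ↔ ∃ x ∈ S, k x = c := by
    rw [Finset.mem_sort, Set.Finite.mem_toFinset, Set.mem_image]
  have keys_strictMono : StrictMono keys.get := (Finset.sortedLT_sort _).strictMono_get
  refine ⟨keys.map fun c => {y ∈ S | k y = c}, fun P hP => ?_, fun x hx => ?_, ?_⟩
  · obtain ⟨c, hc, rfl⟩ := List.mem_map.1 hP
    obtain ⟨x, hx, rfl⟩ := mem_keys.1 hc
    exact ⟨x, hx, rfl⟩
  · have hfiber : {y ∈ S | k y = k x} ∈ keys.map fun c => {y ∈ S | k y = c} :=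
      List.mem_map_of_mem (mem_keys.2 ⟨x, hx, rfl⟩)
    obtain ⟨i, hi⟩ := List.get_of_mem hfiber
    exact ⟨i, hi ▸ ⟨hx, rfl⟩⟩
  · intro i j x hx y hy hxy
    simp only [List.get_eq_getElem, List.getElem_map, Set.mem_ofPred_eq] at hx hy
    rw [hx.2, hy.2] at hxy
    have key_le : keys.get (i.cast (List.length_map _)) ≤ keys.get (j.cast (List.length_map _)) :=
      hxy
    exact keys_strictMono.le_iff_le.1 key_le

theorem toLinearExtension_injective [PartialOrder X] :
    Function.Injective (toLinearExtension : X →o LinearExtension X) :=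
  fun _ _ h => h

theorem exists_list_antisymmRel_classes [Preorder X] {S : Set X} (hS : S.Finite) :
    ∃ L : List (Set X),
      (∀ P ∈ L, ∃ x ∈ S, P = {y ∈ S | AntisymmRel (· ≤ ·) y x}) ∧
      (∀ x ∈ S, ∃ i, x ∈ L.get i) ∧
      (∀ i j, ∀ x ∈ L.get i, ∀ y ∈ L.get j, x ≤ y → i ≤ j) := by
  let rank (x : X) : LinearExtension (Antisymmetrization X (· ≤ ·)) :=
    toLinearExtension (toAntisymmetrization (· ≤ ·) x)
  have rank_eq_iff {x y : X} : rank x = rank y ↔ AntisymmRel (· ≤ ·) x y :=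
    toLinearExtension_injective.eq_iff.trans Quotient.eq
  have rank_mono : Monotone rank := toLinearExtension.monotone.comp toAntisymmetrization_mono
  obtain ⟨L, hclass, hcover, hord⟩ := exists_list_fibers rank hS
  simp only [rank_eq_iff] at hclass
  exact ⟨L, hclass, hcover, fun i j x hx y hy hxy => hord i j x hx y hy (rank_mono hxy)⟩

theorem disjoint_get_of_ordered [Preorder X] {L : List (Set X)}
    (hord : ∀ i j, ∀ x ∈ L.get i, ∀ y ∈ L.get j, x ≤ y → i ≤ j) {i j : Fin L.length}
    (hij : i ≠ j) : Disjoint (L.get i) (L.get j) :=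
  Set.disjoint_left.2 fun x hi hj =>
    hij ((hord i j x hi x hj le_rfl).antisymm (hord j i x hj x hi le_rfl))

end OrderedClasses

section Values

variable {I : Inst σ α} {τ : UID σ} {φ : UFD σ}

/-- The set of elements occurring at position `p` in the instance `I`. -/
def valuesAt (I : Inst σ α) (p : σ.Pos) : Set α := {a | occursAt I p a}

theorem valuesAt_finite (hI : I.Finite) (p : σ.Pos) : (valuesAt I p).Finite :=
  (hI.preimage sigma_mk_injective.injOn).image fun t : Fin (σ.ar p.1) → α => t p.2

theorem satUID_iff_valuesAt_subset : satUID I τ ↔ valuesAt I τ.src ⊆ valuesAt I τ.dst :=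
  Iff.rfl

theorem exists_fun_of_satUFD (h : satUFD I φ) :
    ∃ g : α → α, ∀ t : Fin (σ.ar φ.rel) → α,
      (⟨φ.rel, t⟩ : Fact σ α) ∈ I → g (t φ.src) = t φ.dst := by
  let T : Set (Fin (σ.ar φ.rel) → α) := {t | (⟨φ.rel, t⟩ : Fact σ α) ∈ I}
  have hfactor : (fun t : T => t.1 φ.dst).FactorsThrough fun t : T => t.1 φ.src :=
    fun t u htu => h t u t.2 u.2 htu
  cases isEmpty_or_nonempty α with
  | inl _ => exact ⟨id, fun t _ => isEmptyElim (t φ.src)⟩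
  | inr _ =>
    obtain ⟨g, hg⟩ := (Function.factorsThrough_iff _).1 hfactor
    exact ⟨g, fun t ht => (congrFun hg ⟨t, ht⟩).symm⟩

theorem image_valuesAt_posSrc {g : α → α}
    (hg : ∀ t : Fin (σ.ar φ.rel) → α, (⟨φ.rel, t⟩ : Fact σ α) ∈ I → g (t φ.src) = t φ.dst) :
    g '' valuesAt I φ.posSrc = valuesAt I φ.posDst := by
  ext b
  constructor
  · rintro ⟨_, ⟨t, ht, rfl⟩, rfl⟩
    exact ⟨t, ht, (hg t ht).symm⟩
  · rintro ⟨t, ht, rfl⟩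
    exact ⟨_, ⟨t, ht, rfl⟩, hg t ht⟩

theorem satUID.ncard_le (h : satUID I τ) (hI : I.Finite) :
    (valuesAt I τ.src).ncard ≤ (valuesAt I τ.dst).ncard :=
  Set.ncard_le_ncard (satUID_iff_valuesAt_subset.1 h) (valuesAt_finite hI _)

theorem satUFD.ncard_le (h : satUFD I φ) (hI : I.Finite) :
    (valuesAt I φ.posDst).ncard ≤ (valuesAt I φ.posSrc).ncard := by
  obtain ⟨g, hg⟩ := exists_fun_of_satUFD h
  rw [← image_valuesAt_posSrc hg]
  exact Set.ncard_image_le (valuesAt_finite hI _)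

theorem satUID.rev (h : satUID I τ) (hI : I.Finite)
    (hcard : (valuesAt I τ.dst).ncard ≤ (valuesAt I τ.src).ncard) : satUID I τ.rev :=
  satUID_iff_valuesAt_subset.2
    (Set.eq_of_subset_of_ncard_le h hcard (valuesAt_finite hI _)).superset

theorem satUFD.rev (h : satUFD I φ) (hI : I.Finite)
    (hcard : (valuesAt I φ.posSrc).ncard ≤ (valuesAt I φ.posDst).ncard) : satUFD I φ.rev := by
  obtain ⟨g, hg⟩ := exists_fun_of_satUFD h
  have himage_card : (g '' valuesAt I φ.posSrc).ncard = (valuesAt I φ.posSrc).ncard := by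
    rw [image_valuesAt_posSrc hg]
    exact (h.ncard_le hI).antisymm hcard
  have hinj : Set.InjOn g (valuesAt I φ.posSrc) :=
    Set.injOn_of_ncard_image_eq himage_card (valuesAt_finite hI _)
  intro t u ht hu htu
  refine hinj ⟨t, ht, rfl⟩ ⟨u, hu, rfl⟩ ?_
  calc g (t φ.src) = t φ.dst := hg t ht
    _ = u φ.dst := htu
    _ = g (u φ.src) := (hg u hu).symm

end Values

instance finite_uid (σ : Sig) : Finite (UID σ) := by
  have := σ.rel_fin
  refine Finite.of_injective (fun τ : UID σ => (τ.src, τ.dst)) ?_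
  rintro ⟨_, _, _⟩ ⟨_, _, _⟩ ⟨⟩
  rfl

section Closure

variable {Su : Set (UID σ)} {Sf : Set (UFD σ)}

/-- The relation `p ≼ q` on positions: every finite instance satisfying `Su` and `Sf` has at most
as many distinct elements at `p` as at `q`. -/
def CardLE (Su : Set (UID σ)) (Sf : Set (UFD σ)) (p q : σ.Pos) : Prop :=
  ∀ I : Inst σ ℕ, I.Finite → satAllU I Su Sf → (valuesAt I p).ncard ≤ (valuesAt I q).ncard

theorem CardLE.trans {p q r : σ.Pos} (hpq : CardLE Su Sf p q) (hqr : CardLE Su Sf q r) :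
    CardLE Su Sf p r :=
  fun I hI hsat => (hpq I hI hsat).trans (hqr I hI hsat)

theorem cardLE_of_mem_uid {τ : UID σ} (hτ : τ ∈ Su) : CardLE Su Sf τ.src τ.dst :=
  fun _ hI hsat => (hsat.1 τ hτ).ncard_le hI

theorem cardLE_of_mem_ufd {φ : UFD σ} (hφ : φ ∈ Sf) : CardLE Su Sf φ.posDst φ.posSrc :=
  fun _ hI hsat => (hsat.2 φ hφ).ncard_le hI

theorem cardLE_of_leads {τ τ' : UID σ} (h : leads Sf τ τ') : CardLE Su Sf τ.dst τ'.src := by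
  obtain ⟨φ, hφ, hsrc, hdst⟩ := h
  exact hsrc ▸ hdst ▸ cardLE_of_mem_ufd hφ

theorem rev_mem_uid (hclU : ∀ τ : UID σ, finImpUIDu Su Sf τ → τ ∈ Su) {τ : UID σ}
    (hτ : τ ∈ Su) (hcard : CardLE Su Sf τ.dst τ.src) : τ.rev ∈ Su :=
  hclU _ fun I hI hsat => (hsat.1 τ hτ).rev hI (hcard I hI hsat)

theorem rev_mem_ufd (hclF : ∀ φ : UFD σ, finImpUFDu Su Sf φ → φ ∈ Sf) {φ : UFD σ}
    (hφ : φ ∈ Sf) (hcard : CardLE Su Sf φ.posSrc φ.posDst) : φ.rev ∈ Sf :=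
  hclF _ fun I hI hsat => (hsat.2 φ hφ).rev hI (hcard I hI hsat)

theorem transClosedUID_of_finImp (hclU : ∀ τ : UID σ, finImpUIDu Su Sf τ → τ ∈ Su) :
    TransClosedUID Su := by
  intro τ hτ τ' hτ' hmid hne
  refine hclU _ fun I _ hsat a ha => hsat.1 τ' hτ' a ?_
  exact hmid ▸ hsat.1 τ hτ a ha

theorem transClosedUFD_of_finImp (hclF : ∀ φ : UFD σ, finImpUFDu Su Sf φ → φ ∈ Sf) :
    TransClosedUFD Sf :=
  fun _ _ _ _ _ _ _ hij hjk => hclF _ fun _ _ hsat t u ht hu htu =>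
    hsat.2 _ hjk t u ht hu (hsat.2 _ hij t u ht hu htu)

end Closure

section Precedes

variable {Su : Set (UID σ)} {Sf : Set (UFD σ)}

/-- The preorder on UIDs whose classes form the partition. On `Su` it relates `τ` to `τ'` when they
are equal or `τ.dst ≼ τ'.src`; requiring `τ' ∈ Su` makes it transitive on all UIDs, since then
`τ'.src ≼ τ'.dst`. -/
def Precedes (Su : Set (UID σ)) (Sf : Set (UFD σ)) (τ τ' : UID σ) : Prop :=
  τ = τ' ∨ τ' ∈ Su ∧ CardLE Su Sf τ.dst τ'.src

theorem Precedes.trans {τ τ' τ'' : UID σ} (h : Precedes Su Sf τ τ')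
    (h' : Precedes Su Sf τ' τ'') : Precedes Su Sf τ τ'' := by
  rcases h with rfl | ⟨hτ', hle⟩
  · exact h'
  · rcases h' with rfl | ⟨hτ'', hle'⟩
    · exact .inr ⟨hτ', hle⟩
    · exact .inr ⟨hτ'', (hle.trans (cardLE_of_mem_uid hτ')).trans hle'⟩

/-- `Precedes` as a preorder; not an instance, as it depends on `Su` and `Sf`. -/
abbrev precedesPreorder (Su : Set (UID σ)) (Sf : Set (UFD σ)) : Preorder (UID σ) where
  le := Precedes Su Sf
  le_refl _ := .inl rfl
  le_trans _ _ _ := Precedes.trans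

/-- The class of `τ` in `Su` for the equivalence relation of `Precedes`. -/
def precedesClass (Su : Set (UID σ)) (Sf : Set (UFD σ)) (τ : UID σ) : Set (UID σ) :=
  {τ' ∈ Su | AntisymmRel (Precedes Su Sf) τ' τ}

theorem self_mem_precedesClass {τ : UID σ} (hτ : τ ∈ Su) : τ ∈ precedesClass Su Sf τ :=
  ⟨hτ, .inl rfl, .inl rfl⟩

theorem mem_precedesClass_iff {τ τ' : UID σ} (hτ : τ ∈ Su) :
    τ' ∈ precedesClass Su Sf τ ↔
      τ' ∈ Su ∧ (τ' = τ ∨ CardLE Su Sf τ'.dst τ.src ∧ CardLE Su Sf τ.dst τ'.src) := by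
  refine and_congr_right fun hτ' => ?_
  simp only [AntisymmRel, Precedes, hτ, hτ', true_and, eq_comm (a := τ), ← or_and_left]

theorem mem_precedesClass_iff_of_cardLE {τ τ' : UID σ} (hτ : τ ∈ Su)
    (hcyc : CardLE Su Sf τ.dst τ.src) :
    τ' ∈ precedesClass Su Sf τ ↔
      τ' ∈ Su ∧ CardLE Su Sf τ'.dst τ.src ∧ CardLE Su Sf τ.dst τ'.src := by
  rw [mem_precedesClass_iff hτ, or_iff_right_of_imp]
  rintro rfl
  exact ⟨hcyc, hcyc⟩

theorem cardLE_of_occursInUIDs_precedesClass {τ : UID σ} (hτ : τ ∈ Su)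
    (hcyc : CardLE Su Sf τ.dst τ.src) {p q : σ.Pos}
    (hp : occursInUIDs (precedesClass Su Sf τ) p) (hq : occursInUIDs (precedesClass Su Sf τ) q) :
    CardLE Su Sf p q := by
  obtain ⟨τ₁, hτ₁, hp⟩ := hp
  obtain ⟨τ₂, hτ₂, hq⟩ := hq
  obtain ⟨hmem₁, hle₁, -⟩ := (mem_precedesClass_iff_of_cardLE hτ hcyc).1 hτ₁
  obtain ⟨hmem₂, -, hge₂⟩ := (mem_precedesClass_iff_of_cardLE hτ hcyc).1 hτ₂
  have hp_le : CardLE Su Sf p τ.src := by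
    rcases hp with rfl | rfl
    · exact (cardLE_of_mem_uid hmem₁).trans hle₁
    · exact hle₁
  have hle_q : CardLE Su Sf τ.dst q := by
    rcases hq with rfl | rfl
    · exact hge₂
    · exact hge₂.trans (cardLE_of_mem_uid hmem₂)
  exact (hp_le.trans (cardLE_of_mem_uid hτ)).trans hle_q

theorem reversible_precedesClass (hclU : ∀ τ : UID σ, finImpUIDu Su Sf τ → τ ∈ Su)
    (hclF : ∀ φ : UFD σ, finImpUFDu Su Sf φ → φ ∈ Sf) {τ : UID σ} (hτ : τ ∈ Su)
    (hcyc : CardLE Su Sf τ.dst τ.src) : Reversible (precedesClass Su Sf τ) Sf := by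
  have hmem {τ' : UID σ} := mem_precedesClass_iff_of_cardLE (τ' := τ') hτ hcyc
  have hequiv {p q : σ.Pos} := cardLE_of_occursInUIDs_precedesClass hτ hcyc (p := p) (q := q)
  refine ⟨?_, transClosedUFD_of_finImp hclF, ?_, ?_⟩
  · intro τ₁ hτ₁ τ₂ hτ₂ hmid hne
    exact hmem.2 ⟨transClosedUID_of_finImp hclU _ hτ₁.1 _ hτ₂.1 hmid hne,
      (hmem.1 hτ₂).2.1, (hmem.1 hτ₁).2.2⟩
  · intro τ' hτ'
    have hsrc : occursInUIDs (precedesClass Su Sf τ) τ'.src := ⟨τ', hτ', .inl rfl⟩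
    have hdst : occursInUIDs (precedesClass Su Sf τ) τ'.dst := ⟨τ', hτ', .inr rfl⟩
    have hself := self_mem_precedesClass (Sf := Sf) hτ
    exact hmem.2 ⟨rev_mem_uid hclU hτ'.1 (hequiv hdst hsrc),
      hequiv hsrc ⟨τ, hself, .inl rfl⟩, hequiv ⟨τ, hself, .inr rfl⟩ hdst⟩
  · intro φ hφ hsrc hdst
    exact rev_mem_ufd hclF hφ (hequiv hsrc hdst)

theorem precedesClass_eq_singleton {τ : UID σ} (hτ : τ ∈ Su)
    (hcyc : ¬ CardLE Su Sf τ.dst τ.src) : precedesClass Su Sf τ = {τ} := by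
  refine Set.Subset.antisymm ?_ (Set.singleton_subset_iff.2 (self_mem_precedesClass hτ))
  intro τ' hτ'
  obtain ⟨hmem, heq | ⟨hle, hge⟩⟩ := (mem_precedesClass_iff hτ).1 hτ'
  · exact heq
  · exact absurd ((hge.trans (cardLE_of_mem_uid hmem)).trans hle) hcyc

theorem precedesClass_reversible_or_trivial (hclU : ∀ τ : UID σ, finImpUIDu Su Sf τ → τ ∈ Su)
    (hclF : ∀ φ : UFD σ, finImpUFDu Su Sf φ → φ ∈ Sf) {τ : UID σ} (hτ : τ ∈ Su) :
    Reversible (precedesClass Su Sf τ) Sf ∨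
      ∃ τ' : UID σ, precedesClass Su Sf τ = {τ'} ∧ ¬ leads Sf τ' τ' := by
  by_cases hcyc : CardLE Su Sf τ.dst τ.src
  · exact .inl (reversible_precedesClass hclU hclF hτ hcyc)
  · exact .inr ⟨τ, precedesClass_eq_singleton hτ hcyc, fun h => hcyc (cardLE_of_leads h)⟩

end Precedes

/-- **Manageable partitions exist.** If the UIDs `Su` and UFDs `Sf` are closed under
finite implication, then `Su` has a manageable partition: an ordered partition
(with respect to `↣`) each of whose classes is either reversible (with `Sf`) or
trivial. -/
theorem manageable_partition
    {σ : Sig} (Su : Set (UID σ)) (Sf : Set (UFD σ))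
    (hclU : ∀ τ : UID σ, finImpUIDu Su Sf τ → τ ∈ Su)
    (hclF : ∀ φ : UFD σ, finImpUFDu Su Sf φ → φ ∈ Sf) :
    ∃ L : List (Set (UID σ)),
      -- the classes are nonempty and partition `Su`
      (∀ P ∈ L, P.Nonempty) ∧
      (∀ τ ∈ Su, ∃ i : Fin L.length, τ ∈ L.get i) ∧
      (∀ i : Fin L.length, ∀ τ ∈ L.get i, τ ∈ Su) ∧
      (∀ i j : Fin L.length, i ≠ j → Disjoint (L.get i) (L.get j)) ∧
      -- the partition is ordered with respect to `↣`
      (∀ i j : Fin L.length, ∀ τ ∈ L.get i, ∀ τ' ∈ L.get j,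
          leads Sf τ τ' → (i : ℕ) ≤ (j : ℕ)) ∧
      -- each class is reversible or trivial
      (∀ P ∈ L, Reversible P Sf ∨ ∃ τ : UID σ, P = {τ} ∧ ¬ leads Sf τ τ) := by
  let _ := precedesPreorder Su Sf
  obtain ⟨L, hclass, hcover, hord⟩ := exists_list_antisymmRel_classes Su.toFinite
  replace hclass : ∀ P ∈ L, ∃ τ ∈ Su, P = precedesClass Su Sf τ := hclass
  have hsub : ∀ P ∈ L, P ⊆ Su := by
    intro P hP
    obtain ⟨τ, -, rfl⟩ := hclass P hP
    exact Set.sep_subset _ _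
  refine ⟨L, ?_, hcover, fun i => hsub _ (L.get_mem i), fun _ _ => disjoint_get_of_ordered hord,
    ?_, ?_⟩
  · intro P hP
    obtain ⟨τ, hτ, rfl⟩ := hclass P hP
    exact ⟨τ, self_mem_precedesClass hτ⟩
  · intro i j τ hi τ' hj hlead
    exact hord i j τ hi τ' hj (.inr ⟨hsub _ (L.get_mem j) hj, cardLE_of_leads hlead⟩)
  · intro P hP
    obtain ⟨τ, hτ, rfl⟩ := hclass P hP
    exact precedesClass_reversible_or_trivial hclU hclF hτ

end FQA
end
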